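/- arXiv:1906.04938 — 4 statements merged into one kernel-verified Lean document; each statement's English description precedes it below -/
import Mathlib

section
/- Let f : ℝⁿ → ℝ be C¹, nonnegative, not identically zero, with compact support, c := max_{ℝⁿ} f > 0, and U := {x ∈ ℝⁿ : f(x) = c}; assume U contains a closed ball of radius n-1. Let v, w : ℝⁿ → ℝ be continuous, with v a viscosity subsolution and w a viscosity supersolution of -(div(Dv/|Dv|)+1)|Dv| = f(x) - c in ℝⁿ, and suppose there is a constant C > 0 such that -c|x| - c(n-1)·log(|x|+1) - C ≤ v(x) ≤ -c|x| + C and -c|x| - c(n-1)·log(|x|+1) - C ≤ w(x) ≤ -c|x| + C for all x ∈ ℝⁿ. If v ≤ w on U, then v ≤ w on all of ℝⁿ. -/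
open Set Filter Topology
open scoped RealInnerProductSpace

noncomputable section

/-- The trace of a continuous linear endomorphism of `ℝⁿ`. -/
def clmTrace {n : ℕ} (A : EuclideanSpace ℝ (Fin n) →L[ℝ] EuclideanSpace ℝ (Fin n)) : ℝ :=
  LinearMap.trace ℝ (EuclideanSpace ℝ (Fin n)) A.toLinearMap

/-- The (spatial) Hessian of `φ : ℝⁿ → ℝ` at `x`, as the derivative of the gradient. -/
def hess {n : ℕ} (φ : EuclideanSpace ℝ (Fin n) → ℝ) (x : EuclideanSpace ℝ (Fin n)) :
    EuclideanSpace ℝ (Fin n) →L[ℝ] EuclideanSpace ℝ (Fin n) :=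
  fderiv ℝ (gradient φ) x

/-- `tr((I - η⊗η) D²φ(x))` for a continuous linear map `A = D²φ(x)` and `η ∈ ℝⁿ`. -/
def trProj {n : ℕ} (A : EuclideanSpace ℝ (Fin n) →L[ℝ] EuclideanSpace ℝ (Fin n))
    (η : EuclideanSpace ℝ (Fin n)) : ℝ :=
  clmTrace A - ⟪A η, η⟫

/-- `v` is a viscosity subsolution of the stationary level-set equation
`-(div(Dv/|Dv|)+1)|Dv| = g(x)` on the open set `O ⊆ ℝⁿ`.  When the gradient of
the test function does not vanish one uses `η = Dφ/|Dφ|`, noting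
`div(Dφ/|Dφ|)·|Dφ| = tr((I - η⊗η) D²φ)`; when it vanishes, some `η` with `|η| ≤ 1`. -/
def StatSubsol {n : ℕ} (g : EuclideanSpace ℝ (Fin n) → ℝ) (O : Set (EuclideanSpace ℝ (Fin n)))
    (v : EuclideanSpace ℝ (Fin n) → ℝ) : Prop :=
  ∀ φ : EuclideanSpace ℝ (Fin n) → ℝ, ContDiff ℝ 2 φ →
    ∀ x₀ ∈ O, IsLocalMax (fun x => v x - φ x) x₀ →
      (gradient φ x₀ ≠ 0 →
        -(trProj (hess φ x₀) (‖gradient φ x₀‖⁻¹ • gradient φ x₀) + ‖gradient φ x₀‖) ≤ g x₀) ∧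
      (gradient φ x₀ = 0 →
        ∃ η : EuclideanSpace ℝ (Fin n), ‖η‖ ≤ 1 ∧ -(trProj (hess φ x₀) η) ≤ g x₀)

/-- Viscosity supersolution of the stationary level-set equation
`-(div(Dv/|Dv|)+1)|Dv| = g(x)` on the open set `O ⊆ ℝⁿ`. -/
def StatSupersol {n : ℕ} (g : EuclideanSpace ℝ (Fin n) → ℝ) (O : Set (EuclideanSpace ℝ (Fin n)))
    (v : EuclideanSpace ℝ (Fin n) → ℝ) : Prop :=
  ∀ φ : EuclideanSpace ℝ (Fin n) → ℝ, ContDiff ℝ 2 φ →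
    ∀ x₀ ∈ O, IsLocalMin (fun x => v x - φ x) x₀ →
      (gradient φ x₀ ≠ 0 →
        -(trProj (hess φ x₀) (‖gradient φ x₀‖⁻¹ • gradient φ x₀) + ‖gradient φ x₀‖) ≥ g x₀) ∧
      (gradient φ x₀ = 0 →
        ∃ η : EuclideanSpace ℝ (Fin n), ‖η‖ ≤ 1 ∧ -(trProj (hess φ x₀) η) ≥ g x₀)

/-- Spatial gradient of a space-time test function. -/
def sGrad {n : ℕ} (φ : EuclideanSpace ℝ (Fin n) → ℝ → ℝ) (x : EuclideanSpace ℝ (Fin n))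
    (t : ℝ) : EuclideanSpace ℝ (Fin n) :=
  gradient (fun y => φ y t) x

/-- Spatial Hessian of a space-time test function. -/
def sHess {n : ℕ} (φ : EuclideanSpace ℝ (Fin n) → ℝ → ℝ) (x : EuclideanSpace ℝ (Fin n))
    (t : ℝ) : EuclideanSpace ℝ (Fin n) →L[ℝ] EuclideanSpace ℝ (Fin n) :=
  fderiv ℝ (fun y => gradient (fun z => φ z t) y) x

/-- Time derivative of a space-time test function. -/
def tDeriv {n : ℕ} (φ : EuclideanSpace ℝ (Fin n) → ℝ → ℝ) (x : EuclideanSpace ℝ (Fin n))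
    (t : ℝ) : ℝ :=
  deriv (fun s => φ x s) t

/-- `u` is a viscosity subsolution of the level-set equation
`u_t - (div(Du/|Du|)+1)|Du| = f(x)` in `O × (0,∞)`: at any local maximum `(x₀,t₀)`,
`t₀ > 0`, `x₀ ∈ O`, of `u - φ` with `φ` C², the subsolution inequality holds, where
`(div(D_xφ/|D_xφ|)+1)|D_xφ| = tr((I - η⊗η) D_x²φ) + |D_xφ|` with `η = D_xφ/|D_xφ|`
if `D_xφ ≠ 0`, and with some `η`, `|η| ≤ 1`, and no `|D_xφ|` term if `D_xφ = 0`. -/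
def ParabSubsol {n : ℕ} (f : EuclideanSpace ℝ (Fin n) → ℝ) (O : Set (EuclideanSpace ℝ (Fin n)))
    (u : EuclideanSpace ℝ (Fin n) → ℝ → ℝ) : Prop :=
  ∀ φ : EuclideanSpace ℝ (Fin n) → ℝ → ℝ,
    ContDiff ℝ 2 (fun p : EuclideanSpace ℝ (Fin n) × ℝ => φ p.1 p.2) →
    ∀ x₀ ∈ O, ∀ t₀ : ℝ, 0 < t₀ →
      IsLocalMax (fun p : EuclideanSpace ℝ (Fin n) × ℝ => u p.1 p.2 - φ p.1 p.2) (x₀, t₀) →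
        (sGrad φ x₀ t₀ ≠ 0 →
          tDeriv φ x₀ t₀ -
            (trProj (sHess φ x₀ t₀) (‖sGrad φ x₀ t₀‖⁻¹ • sGrad φ x₀ t₀) + ‖sGrad φ x₀ t₀‖)
            ≤ f x₀) ∧
        (sGrad φ x₀ t₀ = 0 →
          ∃ η : EuclideanSpace ℝ (Fin n), ‖η‖ ≤ 1 ∧
            tDeriv φ x₀ t₀ - trProj (sHess φ x₀ t₀) η ≤ f x₀)

/-- Viscosity supersolution of the level-set equation
`u_t - (div(Du/|Du|)+1)|Du| = f(x)` in `O × (0,∞)`. -/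
def ParabSupersol {n : ℕ} (f : EuclideanSpace ℝ (Fin n) → ℝ) (O : Set (EuclideanSpace ℝ (Fin n)))
    (u : EuclideanSpace ℝ (Fin n) → ℝ → ℝ) : Prop :=
  ∀ φ : EuclideanSpace ℝ (Fin n) → ℝ → ℝ,
    ContDiff ℝ 2 (fun p : EuclideanSpace ℝ (Fin n) × ℝ => φ p.1 p.2) →
    ∀ x₀ ∈ O, ∀ t₀ : ℝ, 0 < t₀ →
      IsLocalMin (fun p : EuclideanSpace ℝ (Fin n) × ℝ => u p.1 p.2 - φ p.1 p.2) (x₀, t₀) →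
        (sGrad φ x₀ t₀ ≠ 0 →
          tDeriv φ x₀ t₀ -
            (trProj (sHess φ x₀ t₀) (‖sGrad φ x₀ t₀‖⁻¹ • sGrad φ x₀ t₀) + ‖sGrad φ x₀ t₀‖)
            ≥ f x₀) ∧
        (sGrad φ x₀ t₀ = 0 →
          ∃ η : EuclideanSpace ℝ (Fin n), ‖η‖ ≤ 1 ∧
            tDeriv φ x₀ t₀ - trProj (sHess φ x₀ t₀) η ≥ f x₀)

end

/-!
For `τ > 0`, the function `(1 + τ) v` decays strictly faster than `w` and is a subsolution for the
right-hand side `(1 + τ) g`, where `g = f - c ≤ 0`. Hence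
`(1 + τ) v x - w y - α ‖x - y‖⁴ / (1 + ‖x - y‖²)` attains its maximum for every `α ≥ 1`, at a point
`(x, y)` say. If `x = y`, the test function for `v` at `x` has zero gradient and zero Hessian, so
that `g x = 0`. If `x ≠ y`, the Crandall–Ishii theorem on sums and the ellipticity of the equation
give `g y ≤ (1 + τ) g x`. As `α → ∞` the maximum points accumulate at a diagonal point `(z, z)` with
`g z ≤ (1 + τ) g z`, that is, `g z = 0`. The values of `(1 + τ) v - w` are thus bounded by those on
`{f = c}`, where `v ≤ w`, and letting `τ → 0` yields the theorem.

For the theorem on sums, both functions are replaced by their Lasry–Lions regularizations, which are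
`C^{1,1}` and have a sum with a maximum at the same point. Jensen's lemma provides nearby points at
which both regularizations are twice differentiable and the sum of the Hessians is almost
nonpositive; at such a point the second-order expansion of a regularization is carried back to the
original function, because the set where the regularization agrees with one of the paraboloids that
touch it from above is convex, hence a single point when the paraboloid has the larger Hessian.
-/

open Asymptotics

section Expansion

variable {E : Type*} [NormedAddCommGroup E] [InnerProductSpace ℝ E]

/-- `u` has the second-order expansion `u (x + h) = u x + ⟪p, h⟫ + ½ ⟪X h, h⟫ + o(‖h‖²)` at `x`:
the pair `(p, X)` plays the role of the gradient and the Hessian of `u`. -/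
def HasQuadraticExpansionAt (u : E → ℝ) (p : E) (X : E →L[ℝ] E) (x : E) : Prop :=
  (fun h => u (x + h) - u x - ⟪p, h⟫ - 1 / 2 * ⟪X h, h⟫) =o[𝓝 0] fun h => ‖h‖ ^ 2

theorem HasQuadraticExpansionAt.add {u₁ u₂ : E → ℝ} {p₁ p₂ x : E} {X₁ X₂ : E →L[ℝ] E}
    (h₁ : HasQuadraticExpansionAt u₁ p₁ X₁ x) (h₂ : HasQuadraticExpansionAt u₂ p₂ X₂ x) :
    HasQuadraticExpansionAt (fun y => u₁ y + u₂ y) (p₁ + p₂) (X₁ + X₂) x :=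
  (IsLittleO.add h₁ h₂).congr_left fun h => by
    rw [add_apply, inner_add_left, inner_add_left]; ring

theorem HasQuadraticExpansionAt.tendsto_ray {u : E → ℝ} {p x : E} {X : E →L[ℝ] E}
    (hu : HasQuadraticExpansionAt u p X x) (h : E) :
    Tendsto (fun s : ℝ => (u (x + s • h) - u x - s * ⟪p, h⟫) / s ^ 2) (𝓝[≠] 0)
      (𝓝 (1 / 2 * ⟪X h, h⟫)) := by
  have hray : Tendsto (fun s : ℝ => s • h) (𝓝[≠] 0) (𝓝 0) :=
    ((continuous_id.smul continuous_const).tendsto' 0 0 (zero_smul ℝ h)).mono_left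
      nhdsWithin_le_nhds
  have hlittle : (fun s : ℝ => u (x + s • h) - u x - ⟪p, s • h⟫ - 1 / 2 * ⟪X (s • h), s • h⟫)
      =o[𝓝[≠] 0] fun s => s ^ 2 := by
    refine (hu.comp_tendsto hray).trans_isBigO (.of_bound (‖h‖ ^ 2) (.of_forall fun s => ?_))
    simp only [Function.comp_apply, norm_smul, norm_pow, norm_norm, norm_mul]
    exact le_of_eq (by ring)
  refine tendsto_sub_nhds_zero_iff.1 (hlittle.tendsto_div_nhds_zero.congr' ?_)
  filter_upwards [self_mem_nhdsWithin] with s hs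
  have hs0 : s ≠ 0 := hs
  simp only [map_smul, real_inner_smul_left, real_inner_smul_right]
  field_simp

theorem HasQuadraticExpansionAt.half_inner_le {u : E → ℝ} {p x h : E} {X : E →L[ℝ] E} {b : ℝ}
    (hu : HasQuadraticExpansionAt u p X x)
    (hle : ∀ᶠ s : ℝ in 𝓝[>] 0, u (x + s • h) ≤ u x + s * ⟪p, h⟫ + b * s ^ 2) :
    1 / 2 * ⟪X h, h⟫ ≤ b := by
  refine le_of_tendsto ((hu.tendsto_ray h).mono_left (nhdsGT_le_nhdsNE 0)) ?_
  filter_upwards [hle, self_mem_nhdsWithin] with s hs hs0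
  rw [div_le_iff₀ (pow_pos hs0 2)]
  linarith

theorem HasQuadraticExpansionAt.le_half_inner {u : E → ℝ} {p x h : E} {X : E →L[ℝ] E} {b : ℝ}
    (hu : HasQuadraticExpansionAt u p X x)
    (hle : ∀ᶠ s : ℝ in 𝓝[>] 0, u x + s * ⟪p, h⟫ + b * s ^ 2 ≤ u (x + s • h)) :
    b ≤ 1 / 2 * ⟪X h, h⟫ := by
  refine ge_of_tendsto ((hu.tendsto_ray h).mono_left (nhdsGT_le_nhdsNE 0)) ?_
  filter_upwards [hle, self_mem_nhdsWithin] with s hs hs0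
  rw [le_div_iff₀ (pow_pos hs0 2)]
  linarith

theorem hasDerivAt_comp_line_sub_quadratic [CompleteSpace E] {u : E → ℝ} {x h p q : E}
    {X : E →L[ℝ] E} {s : ℝ} (hu : HasGradientAt u q (x + s • h)) :
    HasDerivAt (fun s : ℝ => u (x + s • h) - s * ⟪p, h⟫ - 1 / 2 * s ^ 2 * ⟪X h, h⟫)
      ⟪q - p - X (s • h), h⟫ s := by
  have hline : HasDerivAt (fun s : ℝ => x + s • h) h s := by
    simpa using ((hasDerivAt_id s).smul_const h).const_add x
  have hlin : HasDerivAt (fun s : ℝ => s * ⟪p, h⟫) ⟪p, h⟫ s := by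
    simpa using (hasDerivAt_id s).mul_const ⟪p, h⟫
  have hquad : HasDerivAt (fun s : ℝ => 1 / 2 * s ^ 2 * ⟪X h, h⟫) (s * ⟪X h, h⟫) s :=
    (((hasDerivAt_pow 2 s).const_mul (1 / 2 : ℝ)).mul_const ⟪X h, h⟫).congr_deriv (by simp)
  refine (((hu.hasFDerivAt.comp_hasDerivAt s hline).sub hlin).sub hquad).congr_deriv ?_
  simp [inner_sub_left, real_inner_smul_left]

theorem hasQuadraticExpansionAt_of_hasGradientAt [CompleteSpace E] {u : E → ℝ} {D : E → E} {x : E}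
    {X : E →L[ℝ] E} (hu : ∀ y, HasGradientAt u (D y) y) (hD : HasFDerivAt D X x) :
    HasQuadraticExpansionAt u (D x) X x := by
  rw [hasFDerivAt_iff_isLittleO_nhds_zero] at hD
  refine isLittleO_iff.2 fun ε hε => ?_
  obtain ⟨r, hr, hball⟩ := Metric.eventually_nhds_iff_ball.1 (isLittleO_iff.1 hD hε)
  filter_upwards [Metric.ball_mem_nhds (0 : E) hr] with h hh
  have hbound : ∀ s ∈ Ico (0 : ℝ) 1, ‖⟪D (x + s • h) - D x - X (s • h), h⟫‖ ≤ ε * ‖h‖ ^ 2 := by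
    intro s hs
    have hsh : ‖s • h‖ ≤ ‖h‖ := by
      rw [norm_smul, Real.norm_of_nonneg hs.1]
      exact mul_le_of_le_one_left (norm_nonneg h) hs.2.le
    have hmem : s • h ∈ Metric.ball (0 : E) r :=
      mem_ball_zero_iff.2 (hsh.trans_lt (mem_ball_zero_iff.1 hh))
    calc ‖⟪D (x + s • h) - D x - X (s • h), h⟫‖
        ≤ ‖D (x + s • h) - D x - X (s • h)‖ * ‖h‖ := norm_inner_le_norm _ _
      _ ≤ ε * ‖s • h‖ * ‖h‖ := by gcongr; exact hball _ hmem
      _ ≤ ε * ‖h‖ * ‖h‖ := by gcongr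
      _ = ε * ‖h‖ ^ 2 := by ring
  have hmean := norm_image_sub_le_of_norm_deriv_le_segment_01'
    (fun s _ => (hasDerivAt_comp_line_sub_quadratic (p := D x) (X := X)
      (hu (x + s • h))).hasDerivWithinAt) hbound
  rw [Real.norm_of_nonneg (sq_nonneg ‖h‖)]
  refine (congrArg norm ?_).trans_le hmean
  simp only [one_smul, zero_smul, add_zero]
  ring

end Expansion

section Moreau

theorem exists_forall_le_of_tendsto_cocompact {X : Type*} [TopologicalSpace X] [Nonempty X]
    {F : X → ℝ} (hF : LowerSemicontinuous F) (hlim : Tendsto F (cocompact X) atTop) :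
    ∃ x, ∀ y, F x ≤ F y := by
  obtain ⟨x₀⟩ := ‹Nonempty X›
  obtain ⟨K, hK, hKF⟩ := mem_cocompact.1 (hlim.eventually_ge_atTop (F x₀))
  obtain ⟨x, -, hx⟩ := LowerSemicontinuousOn.exists_isMinOn (insert_nonempty x₀ K)
    (hK.insert x₀) (hF.lowerSemicontinuousOn _)
  refine ⟨x, fun y => ?_⟩
  by_cases hy : y ∈ K
  · exact hx (mem_insert_of_mem x₀ hy)
  · exact (hx (mem_insert x₀ K)).trans (hKF hy)

variable {E : Type*} [NormedAddCommGroup E] {μ ν a b : ℝ} {g U u : E → ℝ} {P : E → E}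

/-- `U` is the Moreau envelope (quadratic inf-convolution) `x ↦ min_y (g y + ν ‖x - y‖²)` of `g`,
and `P x` is a point where the minimum is attained. -/
structure IsMoreauEnvelope (ν : ℝ) (g U : E → ℝ) (P : E → E) : Prop where
  le (x y : E) : U x ≤ g y + ν * ‖x - y‖ ^ 2
  eq (x : E) : U x = g (P x) + ν * ‖x - P x‖ ^ 2

/-- `u + μ ‖·‖²` is midpoint convex. -/
def MidpointSemiconvex (μ : ℝ) (u : E → ℝ) : Prop :=
  ∀ x d, 2 * u x ≤ u (x + d) + u (x - d) + 2 * μ * ‖d‖ ^ 2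

theorem IsMoreauEnvelope.upperSemicontinuous (h : IsMoreauEnvelope ν g U P) :
    UpperSemicontinuous U := by
  intro x b hb
  have hcont : ContinuousAt (fun y => g (P x) + ν * ‖y - P x‖ ^ 2) x := by fun_prop
  rw [h.eq x] at hb
  filter_upwards [hcont.eventually (gt_mem_nhds hb)] with y hy using (h.le y (P x)).trans_lt hy

variable [InnerProductSpace ℝ E]

/-- The gradient `2 ν (x - P x)` at `x` of the Moreau envelope with parameter `ν` and minimizers
`P`, whenever this envelope is differentiable. -/
def moreauGradient (ν : ℝ) (P : E → E) (x : E) : E := (2 * ν) • (x - P x)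

theorem exists_isMoreauEnvelope [FiniteDimensional ℝ E] (hg : LowerSemicontinuous g)
    (hlower : ∀ y, b - a * ‖y‖ ^ 2 ≤ g y) (hν : 0 ≤ ν) (haν : a < ν) :
    ∃ U P, IsMoreauEnvelope ν g U P := by
  have hprox (x : E) : ∃ y, ∀ y', g y + ν * ‖x - y‖ ^ 2 ≤ g y' + ν * ‖x - y'‖ ^ 2 := by
    refine exists_forall_le_of_tendsto_cocompact
      (hg.add (Continuous.lowerSemicontinuous (by fun_prop))) ?_
    have hlin : Tendsto (fun t : ℝ => -(2 * ν * ‖x‖) + (ν - a) * t) atTop atTop :=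
      tendsto_atTop_add_const_left _ _ (tendsto_id.const_mul_atTop (sub_pos.2 haν))
    refine tendsto_atTop_mono (fun y => ?_) ((tendsto_atTop_add_const_left _ b
      (tendsto_id.atTop_mul_atTop₀ hlin)).comp (tendsto_norm_cocompact_atTop (E := E)))
    have hinner := mul_le_mul_of_nonneg_left (real_inner_le_norm x y) hν
    have hx := mul_nonneg hν (sq_nonneg ‖x‖)
    simp only [Function.comp_apply, id_eq, norm_sub_sq_real]
    linarith [hlower y]
  choose P hP using hprox
  exact ⟨_, P, fun x y => hP x y, fun _ => rfl⟩

namespace IsMoreauEnvelope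

theorem le_add_inner (h : IsMoreauEnvelope ν g U P) (x y : E) :
    U y ≤ U x + ⟪moreauGradient ν P x, y - x⟫ + ν * ‖y - x‖ ^ 2 := by
  have hexpand : ‖y - P x‖ ^ 2 = ‖x - P x‖ ^ 2 + 2 * ⟪x - P x, y - x⟫ + ‖y - x‖ ^ 2 := by
    rw [← norm_add_sq_real]; congr 2; abel
  have hy := h.le y (P x)
  rw [hexpand] at hy
  rw [h.eq x, moreauGradient, real_inner_smul_left]
  linarith

theorem midpointSemiconvex_neg (h : IsMoreauEnvelope ν g U P) : MidpointSemiconvex ν (-U) := by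
  intro x d
  have hplus := h.le_add_inner x (x + d)
  have hminus := h.le_add_inner x (x - d)
  rw [add_sub_cancel_left] at hplus
  rw [sub_sub_cancel_left, inner_neg_right, norm_neg] at hminus
  simp only [Pi.neg_apply]
  linarith

theorem norm_prox_sub_le (h : IsMoreauEnvelope ν g U P) (hg : MidpointSemiconvex μ g)
    (hν : 0 ≤ ν) (x x' : E) : (ν - μ) * ‖P x - P x'‖ ≤ 2 * ν * ‖x - x'‖ := by
  set d := (1 / 2 : ℝ) • (P x - P x')
  set m := (1 / 2 : ℝ) • (P x + P x')
  have hPx : P x = m + d := by module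
  have hPx' : P x' = m - d := by module
  have hle := h.le x m
  have hle' := h.le x' m
  rw [h.eq, hPx] at hle
  rw [h.eq, hPx'] at hle'
  have hnorms : ‖x - (m + d)‖ ^ 2 + ‖x' - (m - d)‖ ^ 2 =
      ‖x - m‖ ^ 2 + ‖x' - m‖ ^ 2 + 2 * ‖d‖ ^ 2 - 2 * ⟪x - x', d⟫ := by
    rw [← sub_sub, show x' - (m - d) = x' - m + d by abel, norm_add_sq_real, norm_sub_sq_real,
      ← sub_sub_sub_cancel_right x x' m, inner_sub_left (x - m)]
    ring
  have hsq : (ν - μ) * ‖d‖ ^ 2 ≤ ν * ⟪x - x', d⟫ := by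
    linarith [hg m d, congrArg (ν * ·) hnorms]
  have hcs := mul_le_mul_of_nonneg_left (real_inner_le_norm (x - x') d) hν
  have hPd : P x - P x' = (2 : ℝ) • d := by module
  rw [hPd, norm_smul, Real.norm_ofNat]
  rcases (norm_nonneg d).eq_or_lt with hzero | hpos
  · rw [← hzero]
    simpa using by positivity
  · have : (ν - μ) * ‖d‖ ≤ ν * ‖x - x'‖ := le_of_mul_le_mul_right (by linarith) hpos
    linarith

theorem exists_lipschitzWith_moreauGradient (h : IsMoreauEnvelope ν g U P)
    (hg : MidpointSemiconvex μ g) (hν : 0 ≤ ν) (hμν : μ < ν) :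
    ∃ K, LipschitzWith K (moreauGradient ν P) := by
  have hP : LipschitzWith (Real.toNNReal (2 * ν / (ν - μ))) P := by
    refine LipschitzWith.of_dist_le_mul fun x x' => ?_
    have hpos : 0 < ν - μ := sub_pos.2 hμν
    rw [Real.coe_toNNReal _ (by positivity), dist_eq_norm, dist_eq_norm, div_mul_eq_mul_div,
      le_div_iff₀ hpos, mul_comm]
    exact h.norm_prox_sub_le hg hν x x'
  exact ⟨_, (lipschitzWith_smul (2 * ν)).comp (LipschitzWith.id.sub hP)⟩

theorem midpointSemiconvex (h : IsMoreauEnvelope ν g U P) (hg : MidpointSemiconvex μ g)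
    (hμν : μ < ν) : MidpointSemiconvex (μ * ν / (ν - μ)) U := by
  intro x d
  have hpos : 0 < ν - μ := sub_pos.2 hμν
  set e := (1 / 2 : ℝ) • (P (x + d) - P (x - d))
  set m := (1 / 2 : ℝ) • (P (x + d) + P (x - d))
  have hplus : P (x + d) = m + e := by module
  have hminus : P (x - d) = m - e := by module
  have hnorms : ‖x + d - (m + e)‖ ^ 2 + ‖x - d - (m - e)‖ ^ 2 =
      2 * ‖x - m‖ ^ 2 + 2 * ‖d - e‖ ^ 2 := by
    rw [add_sub_add_comm, sub_sub_sub_comm, norm_add_sq_real, norm_sub_sq_real (x - m)]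
    ring
  have hquad : μ * ‖e‖ ^ 2 ≤ ν * ‖d - e‖ ^ 2 + μ * ν / (ν - μ) * ‖d‖ ^ 2 := by
    have hsq : 0 ≤ ‖ν • d - (ν - μ) • e‖ ^ 2 := sq_nonneg _
    rw [norm_sub_sq_real, inner_smul_left, inner_smul_right, norm_smul, norm_smul, mul_pow,
      mul_pow, Real.norm_eq_abs, Real.norm_eq_abs, sq_abs, sq_abs, RCLike.conj_to_real] at hsq
    rw [norm_sub_sq_real, ← mul_le_mul_iff_of_pos_left hpos]
    field_simp
    linarith
  rw [h.eq (x + d), h.eq (x - d), hplus, hminus]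
  linarith [hg m e, h.le x m, congrArg (ν * ·) hnorms]

end IsMoreauEnvelope

theorem hasGradientAt_of_le_of_lipschitzWith [CompleteSpace E] {D : E → E} {c : ℝ} {K : NNReal}
    (hU : ∀ x y, U y ≤ U x + ⟪D x, y - x⟫ + c * ‖y - x‖ ^ 2) (hD : LipschitzWith K D) (x : E) :
    HasGradientAt U (D x) x := by
  refine hasGradientAt_iff_isLittleO.2 (IsBigO.trans_isLittleO (IsBigO.of_bound (|c| + K)
    (.of_forall fun y => ?_)) (isLittleO_pow_sub_sub x one_lt_two))
  have hback := hU y x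
  rw [← neg_sub y x, inner_neg_right, norm_neg] at hback
  have hinner : |⟪D y, y - x⟫ - ⟪D x, y - x⟫| ≤ K * ‖y - x‖ ^ 2 := by
    rw [← inner_sub_left]
    calc |⟪D y - D x, y - x⟫| ≤ ‖D y - D x‖ * ‖y - x‖ := abs_real_inner_le_norm _ _
      _ ≤ K * ‖y - x‖ * ‖y - x‖ := by gcongr; exact hD.norm_sub_le y x
      _ = K * ‖y - x‖ ^ 2 := by ring
  have hc := mul_le_mul_of_nonneg_right (le_abs_self c) (sq_nonneg ‖y - x‖)
  have hK : 0 ≤ K * ‖y - x‖ ^ 2 := by positivity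
  rw [Real.norm_of_nonneg (sq_nonneg ‖y - x‖), Real.norm_eq_abs, abs_le, add_mul]
  obtain ⟨hlo, -⟩ := abs_le.1 hinner
  constructor <;> linarith [hU x y]

theorem HasQuadraticExpansionAt.neg_le_inner_of_midpointSemiconvex {p x : E} {X : E →L[ℝ] E}
    (hu : HasQuadraticExpansionAt u p X x) (hμ : MidpointSemiconvex μ u) (e : E) :
    -(2 * μ * ‖e‖ ^ 2) ≤ ⟪X e, e⟫ := by
  have hlim := (hu.tendsto_ray e).add (hu.tendsto_ray (-e))
  rw [map_neg, inner_neg_neg, ← add_mul, add_halves, one_mul] at hlim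
  refine ge_of_tendsto hlim ?_
  filter_upwards [self_mem_nhdsWithin] with s hs
  have hs2 : 0 < s ^ 2 := pow_two_pos_of_ne_zero hs
  have hmid := hμ x (s • e)
  rw [norm_smul, mul_pow, Real.norm_eq_abs, sq_abs] at hmid
  rw [← add_div, le_div_iff₀ hs2, smul_neg, inner_neg_right, ← sub_eq_add_neg x]
  linarith

end Moreau

section Regularization

variable {E : Type*} [NormedAddCommGroup E] {μ ν a c : ℝ} {v : E → ℝ} {x : E}

/-- The Lasry–Lions regularization `val` of `v`: the sup-convolution
`sup y = max_z (v z - μ ‖y - z‖²)`, attained at `argsup y`, followed by the inf-convolution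
`val x = min_y (sup y + ν ‖x - y‖²)`, attained at `prox x`. -/
structure LasryLions (μ ν : ℝ) (v : E → ℝ) where
  sup : E → ℝ
  argsup : E → E
  val : E → ℝ
  prox : E → E
  pos : 0 < μ
  lt : μ < ν
  isSup : IsMoreauEnvelope μ (-v) (-sup) argsup
  isInf : IsMoreauEnvelope ν sup val prox

namespace LasryLions

theorem sub_le_sup (L : LasryLions μ ν v) (y z : E) : v z - μ * ‖y - z‖ ^ 2 ≤ L.sup y := by
  have h := L.isSup.le y z
  simp only [Pi.neg_apply] at h
  linarith

theorem sup_eq (L : LasryLions μ ν v) (y : E) :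
    L.sup y = v (L.argsup y) - μ * ‖y - L.argsup y‖ ^ 2 := by
  have h := L.isSup.eq y
  simp only [Pi.neg_apply] at h
  linarith

theorem prox_eq_self_of_val_le (L : LasryLions μ ν v) (h : L.val x ≤ v x) : L.prox x = x := by
  have hsup := L.sub_le_sup (L.prox x) x
  rw [norm_sub_rev] at hsup
  rw [L.isInf.eq x] at h
  have hnorm : ‖x - L.prox x‖ ^ 2 ≤ 0 :=
    le_of_mul_le_mul_left (by linarith) (sub_pos.2 L.lt)
  rw [sq_nonpos_iff, norm_eq_zero, sub_eq_zero] at hnorm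
  exact hnorm.symm

variable [InnerProductSpace ℝ E]

theorem nonempty [FiniteDimensional ℝ E] (hv : Continuous v) (hle : ∀ z, v z ≤ a * ‖z‖ ^ 2)
    (hμ : 0 < μ) (haμ : a < μ) (hμν : μ < ν) : Nonempty (LasryLions μ ν v) := by
  obtain ⟨U, Z, hU⟩ := exists_isMoreauEnvelope (g := -v) (b := 0) hv.neg.lowerSemicontinuous
    (fun z => by simpa using hle z) hμ.le haμ
  have hlower (y : E) : v 0 - μ * ‖y‖ ^ 2 ≤ (-U) y := by
    have h := hU.le y 0
    rw [sub_zero, Pi.neg_apply] at h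
    rw [Pi.neg_apply]
    linarith
  obtain ⟨V, P, hV⟩ := exists_isMoreauEnvelope hU.upperSemicontinuous.neg hlower
    (hμ.trans hμν).le hμν
  exact ⟨⟨-U, Z, V, P, hμ, hμν, by rwa [neg_neg], hV⟩⟩

/-- The gradient of the Lasry–Lions regularization. -/
def grad (L : LasryLions μ ν v) : E → E := moreauGradient ν L.prox

/-- The point at which `v` is touched when its Lasry–Lions regularization is touched at `x`. -/
noncomputable def contact (L : LasryLions μ ν v) (x : E) : E :=
  x + ((2 * μ)⁻¹ - (2 * ν)⁻¹) • L.grad x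

theorem grad_eq_zero_of_val_le (L : LasryLions μ ν v) (h : L.val x ≤ v x) : L.grad x = 0 := by
  rw [grad, moreauGradient, L.prox_eq_self_of_val_le h, sub_self, smul_zero]

theorem midpointSemiconvex_sup (L : LasryLions μ ν v) : MidpointSemiconvex μ L.sup := by
  simpa using L.isSup.midpointSemiconvex_neg

theorem exists_lipschitzWith_grad (L : LasryLions μ ν v) : ∃ K, LipschitzWith K L.grad :=
  L.isInf.exists_lipschitzWith_moreauGradient L.midpointSemiconvex_sup (L.pos.trans L.lt).le L.lt

theorem hasGradientAt [CompleteSpace E] (L : LasryLions μ ν v) (x : E) :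
    HasGradientAt L.val (L.grad x) x :=
  let ⟨_, hK⟩ := L.exists_lipschitzWith_grad
  hasGradientAt_of_le_of_lipschitzWith L.isInf.le_add_inner hK x

-- `y - (μ / ν) • (y - z)` is the point whose inf-convolution sees the paraboloid
-- `v z - μ ‖· - z‖²` touching `sup` from below at `y`.
theorem le_val (L : LasryLions μ ν v) (y z : E) :
    v z - μ * ‖y - z‖ ^ 2 + ν * ‖(μ / ν) • (y - z)‖ ^ 2 ≤ L.val (y - (μ / ν) • (y - z)) := by
  have hν : 0 < ν := L.pos.trans L.lt
  set x := y - (μ / ν) • (y - z) with hx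
  set b := L.prox x - y with hb
  have hsup := L.sub_le_sup (L.prox x) z
  have hz : L.prox x - z = b + (y - z) := by rw [hb]; abel
  have hprox : x - L.prox x = -(b + (μ / ν) • (y - z)) := by rw [hx, hb]; module
  rw [hz, norm_add_sq_real] at hsup
  rw [L.isInf.eq x, hprox, norm_neg, norm_add_sq_real, inner_smul_right]
  have hb2 := mul_nonneg (sub_pos.2 L.lt).le (sq_nonneg ‖b‖)
  have hcancel : ν * (2 * (μ / ν * ⟪b, y - z⟫)) = 2 * μ * ⟪b, y - z⟫ := by field_simp
  linarith

theorem self_le_val (L : LasryLions μ ν v) (x : E) : v x ≤ L.val x := by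
  simpa using L.le_val x x

end LasryLions

theorem IsMoreauEnvelope.convex_setOf_le [InnerProductSpace ℝ E] {g U : E → ℝ} {P : E → E}
    (h : IsMoreauEnvelope ν g U P) (y : E) : Convex ℝ {x | g y + ν * ‖x - y‖ ^ 2 ≤ U x} := by
  intro x hx x' hx' s t hs ht hst
  have hnorm (u : E) : ‖s • x + t • x' - u‖ ^ 2 =
      s * ‖x - u‖ ^ 2 + t * ‖x' - u‖ ^ 2 - s * t * ‖x - x'‖ ^ 2 := by
    have hs' : s = 1 - t := by linarith
    rw [show s • x + t • x' - u = s • (x - u) + t • (x' - u) by rw [hs']; module,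
      ← sub_sub_sub_cancel_right x x' u, norm_add_sq_real, norm_sub_sq_real (x - u),
      real_inner_smul_left, real_inner_smul_right, norm_smul, norm_smul, Real.norm_of_nonneg hs,
      Real.norm_of_nonneg ht, hs']
    ring
  set ξ := P (s • x + t • x') with hξ
  have hle := mul_le_mul_of_nonneg_left (le_trans hx (h.le x ξ)) hs
  have hle' := mul_le_mul_of_nonneg_left (le_trans hx' (h.le x' ξ)) ht
  rw [mem_ofPred_eq, h.eq (s • x + t • x'), ← hξ, hnorm, hnorm]
  linear_combination hle + hle' + (g ξ - g y) * hst

namespace LasryLions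

variable [InnerProductSpace ℝ E] {X : E →L[ℝ] E}

theorem prox_sub_eq_of_inner_le (L : LasryLions μ ν v)
    (hX : HasQuadraticExpansionAt L.val (L.grad x) X x) (hc : c < 2 * ν)
    (hle : ∀ e, ⟪X e, e⟫ ≤ c * ‖e‖ ^ 2) :
    L.prox x - (μ / ν) • (L.prox x - L.argsup (L.prox x)) = x := by
  set y := L.prox x with hy
  set x' := y - (μ / ν) • (y - L.argsup y) with hx'
  have hmem : x ∈ {x | L.sup y + ν * ‖x - y‖ ^ 2 ≤ L.val x} := (L.isInf.eq x).ge
  have hmem' : x' ∈ {x | L.sup y + ν * ‖x - y‖ ^ 2 ≤ L.val x} := by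
    have h := L.le_val y (L.argsup y)
    rwa [← L.sup_eq, ← norm_neg, ← sub_sub_cancel_left y, ← hx'] at h
  have hnorm : ν * ‖x' - x‖ ^ 2 ≤ 1 / 2 * ⟪X (x' - x), x' - x⟫ := by
    refine hX.le_half_inner ?_
    filter_upwards [Ioc_mem_nhdsGT zero_lt_one] with s hs
    have h := (L.isInf.convex_setOf_le y).add_smul_sub_mem hmem hmem' ⟨hs.1.le, hs.2⟩
    rw [mem_ofPred_eq, add_sub_right_comm, norm_add_sq_real, norm_smul, mul_pow,
      Real.norm_eq_abs, sq_abs, real_inner_smul_right] at h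
    rw [L.isInf.eq x, ← hy, grad, moreauGradient, real_inner_smul_left]
    linarith
  have hzero : ‖x' - x‖ ^ 2 ≤ 0 :=
    le_of_mul_le_mul_left (by linarith [hle (x' - x)]) (sub_pos.2 hc)
  rwa [sq_nonpos_iff, norm_eq_zero, sub_eq_zero] at hzero

theorem sub_contact_le (L : LasryLions μ ν v)
    (hX : HasQuadraticExpansionAt L.val (L.grad x) X x) (hc : c < 2 * ν)
    (hle : ∀ e, ⟪X e, e⟫ ≤ c * ‖e‖ ^ 2) (d : E) :
    v (L.contact x + d) - v (L.contact x) ≤ L.val (x + d) - L.val x := by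
  have hν : ν ≠ 0 := (L.pos.trans L.lt).ne'
  have hμ : μ ≠ 0 := L.pos.ne'
  set y := L.prox x with hy
  set z := L.argsup y with hz
  have hx : y - (μ / ν) • (y - z) = x := L.prox_sub_eq_of_inner_le hX hc hle
  have hxy : x - y = -((μ / ν) • (y - z)) := by rw [← hx]; abel
  have hcontact : L.contact x = z := by
    rw [contact, grad, moreauGradient, ← hy, hxy, ← hx]
    match_scalars <;> field_simp <;> ring
  have hval : L.val x = v z - μ * ‖y - z‖ ^ 2 + ν * ‖(μ / ν) • (y - z)‖ ^ 2 := by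
    rw [L.isInf.eq x, L.sup_eq, ← hy, ← hz, hxy, norm_neg]
  have hd := L.le_val (y + d) (z + d)
  rw [add_sub_add_right_eq_sub, add_sub_right_comm, hx, ← sub_add_cancel (v (z + d)) (v z)] at hd
  rw [hcontact]
  linarith

end LasryLions

end Regularization

section Jensen

open MeasureTheory

variable {E : Type*} [NormedAddCommGroup E] [InnerProductSpace ℝ E] {W : E → ℝ} {D : E → E}
  {x₀ : E} {δ r : ℝ}

/-- The points of `ball x₀ r` at which `W` is touched from above by a paraboloid of opening `δ`
that lies above `W` on the whole space and has slope `D x`. -/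
def upperContactSet (W : E → ℝ) (D : E → E) (x₀ : E) (δ r : ℝ) : Set E :=
  {x ∈ Metric.ball x₀ r | ∀ y, W y ≤ W x + ⟪D x, y - x⟫ + δ / 2 * ‖y - x‖ ^ 2}

theorem exists_forall_sub_le_of_norm_lt [FiniteDimensional ℝ E] (hW : Continuous W)
    (hmax : ∀ x, W x ≤ W x₀) (hδ : 0 < δ) (hr : 0 < r) {q : E} (hq : ‖q‖ < δ * r / 2) :
    ∃ x ∈ Metric.ball x₀ r, ∀ y, W y - δ / 2 * ‖y - x₀‖ ^ 2 - ⟪q, y⟫ ≤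
      W x - δ / 2 * ‖x - x₀‖ ^ 2 - ⟪q, x⟫ := by
  set F : E → ℝ := fun y => W y - δ / 2 * ‖y - x₀‖ ^ 2 - ⟪q, y⟫ with hF
  have hfar (y : E) (hy : y ∉ Metric.ball x₀ r) : F y < F x₀ := by
    rw [mem_ball_iff_norm, not_lt] at hy
    have hinner := neg_le_of_abs_le (abs_real_inner_le_norm q (y - x₀))
    have hnorm : ‖q‖ * ‖y - x₀‖ < δ / 2 * ‖y - x₀‖ ^ 2 := by
      rw [sq, ← mul_assoc]
      refine mul_lt_mul_of_pos_right (hq.trans_le ?_) (hr.trans_le hy)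
      linarith [mul_le_mul_of_nonneg_left hy hδ.le]
    rw [inner_sub_right] at hinner
    simp only [hF, sub_self, norm_zero]
    linarith [hmax y]
  obtain ⟨x, -, hx⟩ := (isCompact_closedBall x₀ r).exists_isMaxOn
    (Metric.nonempty_closedBall.2 hr.le) (f := F) (by fun_prop)
  have hx₀ : F x₀ ≤ F x := hx (Metric.mem_closedBall_self hr.le)
  refine ⟨x, by_contra fun hxr => (hfar x hxr).not_ge hx₀, fun y => ?_⟩
  by_cases hy : y ∈ Metric.ball x₀ r
  · exact hx (Metric.ball_subset_closedBall hy)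
  · exact (hfar y hy).le.trans hx₀

theorem ball_subset_image_upperContactSet [FiniteDimensional ℝ E]
    (hW : ∀ x, HasGradientAt W (D x) x) (hmax : ∀ x, W x ≤ W x₀) (hδ : 0 < δ) (hr : 0 < r) :
    Metric.ball 0 (δ * r / 2) ⊆ (fun x => D x - δ • (x - x₀)) '' upperContactSet W D x₀ δ r := by
  intro q hq
  obtain ⟨x, hxr, hx⟩ := exists_forall_sub_le_of_norm_lt
    (continuous_iff_continuousAt.2 fun y => (hW y).continuousAt) hmax hδ hr
    (mem_ball_zero_iff.1 hq)
  have hderiv : HasFDerivAt (fun y => W y - δ / 2 * ‖y - x₀‖ ^ 2 - ⟪q, y⟫)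
      (InnerProductSpace.toDual ℝ E (D x - δ • (x - x₀) - q)) x := by
    have hsq := (((hasFDerivAt_id x).sub_const x₀).norm_sq).const_mul (δ / 2)
    refine (((hW x).hasFDerivAt.sub hsq).sub (innerSL ℝ q).hasFDerivAt).congr_fderiv ?_
    ext z
    simp only [id_eq, map_sub, ContinuousLinearMap.comp_id, sub_apply,
      InnerProductSpace.toDual_apply_apply, smul_apply, coe_innerSL_apply, nsmul_eq_mul,
      Nat.cast_ofNat, smul_eq_mul, map_smul, sub_left_inj, sub_right_inj]
    ring
  have hgrad : D x - δ • (x - x₀) = q := sub_eq_zero.1 <|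
    (LinearIsometryEquiv.map_eq_zero_iff _).1
      (IsLocalMax.hasFDerivAt_eq_zero (.of_forall hx) hderiv)
  refine ⟨x, ⟨hxr, fun y => ?_⟩, hgrad⟩
  have hle := hx y
  have hnorm : ‖y - x₀‖ ^ 2 = ‖y - x‖ ^ 2 + 2 * ⟪x - x₀, y - x⟫ + ‖x - x₀‖ ^ 2 := by
    rw [← sub_add_sub_cancel y x x₀, norm_add_sq_real, real_inner_comm]
  have hinner : ⟪q, y⟫ - ⟪q, x⟫ = ⟪D x, y - x⟫ - δ * ⟪x - x₀, y - x⟫ := by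
    rw [← inner_sub_right, ← hgrad, inner_sub_left (D x), real_inner_smul_left]
  rw [hnorm] at hle
  linarith

theorem hausdorffMeasure_upperContactSet_ne_zero [FiniteDimensional ℝ E] [MeasurableSpace E]
    [BorelSpace E] (hW : ∀ x, HasGradientAt W (D x) x) {K : NNReal} (hD : LipschitzWith K D)
    (hmax : ∀ x, W x ≤ W x₀) (hδ : 0 < δ) (hr : 0 < r) :
    Measure.hausdorffMeasure (Module.finrank ℝ E) (upperContactSet W D x₀ δ r) ≠ 0 := by
  intro hzero
  obtain ⟨K', hlip⟩ : ∃ K', LipschitzWith K' fun x => D x - δ • (x - x₀) :=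
    ⟨_, hD.sub ((lipschitzWith_smul δ).comp (LipschitzWith.id.sub (LipschitzWith.const x₀)))⟩
  have himage := hlip.hausdorffMeasure_image_le (d := Module.finrank ℝ E) (Nat.cast_nonneg _)
    (upperContactSet W D x₀ δ r)
  rw [hzero, mul_zero] at himage
  exact (Metric.measure_ball_pos (Measure.hausdorffMeasure (Module.finrank ℝ E)) (0 : E)
    (by positivity)).ne' (measure_mono_null (ball_subset_image_upperContactSet hW hmax hδ hr)
      (nonpos_iff_eq_zero.1 himage))

-- Jensen's lemma: the Lipschitz map `D - δ • (· - x₀)` sends the contact set onto a ball, so the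
-- contact set is not null and Rademacher's theorem provides a point of differentiability in it.
theorem exists_hasFDerivAt_inner_add_inner_le [FiniteDimensional ℝ E] {U₁ U₂ : E → ℝ}
    {D₁ D₂ : E → E} {K₁ K₂ : NNReal} (h₁ : ∀ x, HasGradientAt U₁ (D₁ x) x)
    (h₂ : ∀ x, HasGradientAt U₂ (D₂ x) x) (hD₁ : LipschitzWith K₁ D₁) (hD₂ : LipschitzWith K₂ D₂)
    (hmax : ∀ x, U₁ x + U₂ x ≤ U₁ x₀ + U₂ x₀) (hδ : 0 < δ) (hr : 0 < r) :
    ∃ x ∈ Metric.ball x₀ r, ∃ X₁ X₂ : E →L[ℝ] E, HasFDerivAt D₁ X₁ x ∧ HasFDerivAt D₂ X₂ x ∧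
      ∀ e, ⟪X₁ e, e⟫ + ⟪X₂ e, e⟫ ≤ δ * ‖e‖ ^ 2 := by
  borelize E
  have hgrad (x : E) : HasGradientAt (fun y => U₁ y + U₂ y) (D₁ x + D₂ x) x := by
    rw [hasGradientAt_iff_hasFDerivAt, map_add]
    exact (h₁ x).hasFDerivAt.add (h₂ x).hasFDerivAt
  have hfreq := frequently_ae_mem_iff.2
    (hausdorffMeasure_upperContactSet_ne_zero hgrad (hD₁.add hD₂) hmax hδ hr)
  obtain ⟨x, ⟨hxr, hx⟩, hx₁, hx₂⟩ :=
    (hfreq.and_eventually (hD₁.ae_differentiableAt.and hD₂.ae_differentiableAt)).exists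
  refine ⟨x, hxr, _, _, hx₁.hasFDerivAt, hx₂.hasFDerivAt, fun e => ?_⟩
  have hexp := (hasQuadraticExpansionAt_of_hasGradientAt h₁ hx₁.hasFDerivAt).add
    (hasQuadraticExpansionAt_of_hasGradientAt h₂ hx₂.hasFDerivAt)
  have hhalf := hexp.half_inner_le (h := e) (b := δ / 2 * ‖e‖ ^ 2) <| .of_forall fun s => by
    have hs := hx (x + s • e)
    rw [add_sub_cancel_left, inner_smul_right, norm_smul, mul_pow, Real.norm_eq_abs, sq_abs] at hs
    linarith
  rw [add_apply, inner_add_left] at hhalf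
  linarith

end Jensen

section Jets

variable {E : Type*} [NormedAddCommGroup E] [InnerProductSpace ℝ E]

/-- The triples `(x, p, X)` such that `u` is touched from above at `x` by the paraboloid with
slope `p` and Hessian `X`. Its closure consists of the limiting superjets of `u`; since `X` enters
only through its quadratic form, it is not required to be symmetric. -/
def superJet (u : E → ℝ) : Set (E × E × (E →L[ℝ] E)) :=
  {J | ∀ᶠ d in 𝓝 0, u (J.1 + d) ≤ u J.1 + ⟪J.2.1, d⟫ + 1 / 2 * ⟪J.2.2 d, d⟫}

theorem mem_closure_superJet_of_forall_sub_le {u U : E → ℝ} {z p x : E} {X : E →L[ℝ] E}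
    (hle : ∀ d, u (z + d) - u z ≤ U (x + d) - U x) (hU : HasQuadraticExpansionAt U p X x) :
    (z, p, X) ∈ closure (superJet u) := by
  have hlim : Tendsto (fun ε : ℝ => (z, p, X + (2 * ε) • ContinuousLinearMap.id ℝ E)) (𝓝[>] 0)
      (𝓝 (z, p, X)) :=
    (Continuous.tendsto' (by fun_prop) 0 _ (by simp)).mono_left nhdsWithin_le_nhds
  refine mem_closure_of_tendsto hlim ?_
  filter_upwards [self_mem_nhdsWithin] with ε hε
  filter_upwards [isLittleO_iff.1 hU hε] with d hd
  rw [Real.norm_of_nonneg (sq_nonneg ‖d‖)] at hd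
  have hquad : ⟪(X + (2 * ε) • ContinuousLinearMap.id ℝ E) d, d⟫ =
      ⟪X d, d⟫ + 2 * ε * ‖d‖ ^ 2 := by
    simp [inner_add_left, real_inner_smul_left]
  simp only [hquad]
  linarith [hle d, le_of_abs_le hd]

theorem mem_closure_superJet_of_translate {u : E → ℝ} {x₀ p z q : E} {b : ℝ} {X : E →L[ℝ] E}
    (h : (z, q, X) ∈ closure (superJet fun z => u (x₀ + z) - b - ⟪p, z⟫)) :
    (x₀ + z, p + q, X) ∈ closure (superJet u) := by
  refine map_mem_closure (f := fun J : E × E × (E →L[ℝ] E) => (x₀ + J.1, p + J.2.1, J.2.2))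
    (by fun_prop) h fun J hJ => ?_
  refine Eventually.mono hJ fun d hd => ?_
  simp only [inner_add_right, ← add_assoc] at hd
  simp only [inner_add_left]
  linarith

end Jets

section Sums

variable {E : Type*} [NormedAddCommGroup E] [InnerProductSpace ℝ E] {μ ν a : ℝ} {u₁ u₂ : E → ℝ}
  {x₀ y₀ p : E}

namespace LasryLions

theorem continuous_contact (L : LasryLions μ ν u₁) : Continuous L.contact :=
  let ⟨_, hK⟩ := L.exists_lipschitzWith_grad
  continuous_id.add (hK.continuous.const_smul _)

theorem val_add_val_nonpos (L₁ : LasryLions (2 * a) ν u₁) (L₂ : LasryLions (2 * a) ν u₂)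
    (hle : ∀ z z', u₁ z + u₂ z' ≤ a * ‖z - z'‖ ^ 2) (x : E) : L₁.val x + L₂.val x ≤ 0 := by
  have ha : 0 < a := pos_of_mul_pos_right L₁.pos zero_le_two
  have h₁ := L₁.isInf.le x x
  have h₂ := L₂.isInf.le x x
  rw [sub_self, norm_zero, L₁.sup_eq] at h₁
  rw [sub_self, norm_zero, L₂.sup_eq] at h₂
  set z₁ := L₁.argsup x
  set z₂ := L₂.argsup x
  have hpar := parallelogram_law_with_norm ℝ (x - z₁) (x - z₂)
  rw [sub_sub_sub_cancel_left, norm_sub_rev z₂] at hpar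
  linarith [hle z₁ z₂, congrArg (a * ·) hpar,
    mul_nonneg ha.le (mul_self_nonneg ‖x - z₁ + (x - z₂)‖)]

end LasryLions

variable [FiniteDimensional ℝ E]

theorem exists_mem_inner_add_inner_nonpos_of_tendsto {Y : Type*} [TopologicalSpace Y]
    {T₁ T₂ : Set (Y × (E →L[ℝ] E))} {y : ℕ → Y} {y₀ : Y} {X₁ X₂ : ℕ → E →L[ℝ] E} {δ : ℕ → ℝ}
    {K₁ K₂ : ℝ} (hT₁ : IsClosed T₁) (hT₂ : IsClosed T₂) (hy : Tendsto y atTop (𝓝 y₀))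
    (hδ : Tendsto δ atTop (𝓝 0)) (h₁ : ∀ j, (y j, X₁ j) ∈ T₁) (h₂ : ∀ j, (y j, X₂ j) ∈ T₂)
    (hK₁ : ∀ j, ‖X₁ j‖ ≤ K₁) (hK₂ : ∀ j, ‖X₂ j‖ ≤ K₂)
    (hX : ∀ j e, ⟪X₁ j e, e⟫ + ⟪X₂ j e, e⟫ ≤ δ j * ‖e‖ ^ 2) :
    ∃ Y₁ Y₂ : E →L[ℝ] E, (y₀, Y₁) ∈ T₁ ∧ (y₀, Y₂) ∈ T₂ ∧ ∀ e, ⟪Y₁ e, e⟫ + ⟪Y₂ e, e⟫ ≤ 0 := by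
  obtain ⟨⟨Y₁, Y₂⟩, -, φ, hφ, hlim⟩ :=
    ((isCompact_closedBall (0 : E →L[ℝ] E) K₁).prod (isCompact_closedBall 0 K₂)).tendsto_subseq
      (x := fun j => (X₁ j, X₂ j))
      fun j => ⟨mem_closedBall_zero_iff.2 (hK₁ j), mem_closedBall_zero_iff.2 (hK₂ j)⟩
  obtain ⟨hlim₁, hlim₂⟩ := (Prod.tendsto_iff _ _).1 hlim
  have hy' := hy.comp hφ.tendsto_atTop
  refine ⟨Y₁, Y₂, hT₁.mem_of_tendsto (hy'.prodMk_nhds hlim₁) (.of_forall fun j => h₁ (φ j)),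
    hT₂.mem_of_tendsto (hy'.prodMk_nhds hlim₂) (.of_forall fun j => h₂ (φ j)), fun e => ?_⟩
  have hquad : Continuous fun Y : E →L[ℝ] E => ⟪Y e, e⟫ := by fun_prop
  have hle := le_of_tendsto_of_tendsto' (((hquad.tendsto Y₁).comp hlim₁).add
    ((hquad.tendsto Y₂).comp hlim₂)) ((hδ.comp hφ.tendsto_atTop).mul_const (‖e‖ ^ 2))
    fun j => hX (φ j) e
  rwa [zero_mul] at hle

namespace LasryLions

theorem exists_superJets_near (L₁ : LasryLions μ ν u₁) (L₂ : LasryLions μ ν u₂) {δ r : ℝ}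
    (hmax : ∀ x, L₁.val x + L₂.val x ≤ L₁.val x₀ + L₂.val x₀) (hδ : 0 < δ)
    (hδν : δ + 2 * (μ * ν / (ν - μ)) < 2 * ν) (hr : 0 < r) :
    ∃ x ∈ Metric.ball x₀ r, ∃ X₁ X₂ : E →L[ℝ] E,
      (HasFDerivAt L₁.grad X₁ x ∧ (L₁.contact x, L₁.grad x, X₁) ∈ closure (superJet u₁)) ∧
      (HasFDerivAt L₂.grad X₂ x ∧ (L₂.contact x, L₂.grad x, X₂) ∈ closure (superJet u₂)) ∧
      ∀ e, ⟪X₁ e, e⟫ + ⟪X₂ e, e⟫ ≤ δ * ‖e‖ ^ 2 := by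
  obtain ⟨K₁, hK₁⟩ := L₁.exists_lipschitzWith_grad
  obtain ⟨K₂, hK₂⟩ := L₂.exists_lipschitzWith_grad
  obtain ⟨x, hxr, X₁, X₂, hX₁, hX₂, hX⟩ := exists_hasFDerivAt_inner_add_inner_le
    L₁.hasGradientAt L₂.hasGradientAt hK₁ hK₂ hmax hδ hr
  have hexp₁ := hasQuadraticExpansionAt_of_hasGradientAt L₁.hasGradientAt hX₁
  have hexp₂ := hasQuadraticExpansionAt_of_hasGradientAt L₂.hasGradientAt hX₂
  have hlower₁ := hexp₁.neg_le_inner_of_midpointSemiconvex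
    (L₁.isInf.midpointSemiconvex L₁.midpointSemiconvex_sup L₁.lt)
  have hlower₂ := hexp₂.neg_le_inner_of_midpointSemiconvex
    (L₂.isInf.midpointSemiconvex L₂.midpointSemiconvex_sup L₂.lt)
  refine ⟨x, hxr, X₁, X₂, ⟨hX₁, mem_closure_superJet_of_forall_sub_le
    (L₁.sub_contact_le hexp₁ hδν fun e => ?_) hexp₁⟩, ⟨hX₂, mem_closure_superJet_of_forall_sub_le
    (L₂.sub_contact_le hexp₂ hδν fun e => ?_) hexp₂⟩, hX⟩
  · linarith [hX e, hlower₂ e]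
  · linarith [hX e, hlower₁ e]

theorem exists_superJets_contact (L₁ : LasryLions μ ν u₁) (L₂ : LasryLions μ ν u₂)
    (hmax : ∀ x, L₁.val x + L₂.val x ≤ L₁.val x₀ + L₂.val x₀) (hμν : 2 * μ < ν) :
    ∃ X₁ X₂ : E →L[ℝ] E, (L₁.contact x₀, L₁.grad x₀, X₁) ∈ closure (superJet u₁) ∧
      (L₂.contact x₀, L₂.grad x₀, X₂) ∈ closure (superJet u₂) ∧
      ∀ e, ⟪X₁ e, e⟫ + ⟪X₂ e, e⟫ ≤ 0 := by
  obtain ⟨K₁, hK₁⟩ := L₁.exists_lipschitzWith_grad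
  obtain ⟨K₂, hK₂⟩ := L₂.exists_lipschitzWith_grad
  set γ := ν - μ * ν / (ν - μ)
  have hγ_pos : 0 < γ := by
    rw [sub_pos, div_lt_iff₀ (sub_pos.2 L₁.lt), mul_comm]
    exact mul_lt_mul_of_pos_left (by linarith) (L₁.pos.trans L₁.lt)
  have hδ (j : ℕ) : γ * (1 / ((j : ℝ) + 1)) + 2 * (μ * ν / (ν - μ)) < 2 * ν := by
    have hle : γ * (1 / ((j : ℝ) + 1)) ≤ γ :=
      mul_le_of_le_one_right hγ_pos.le (div_le_one_of_le₀ (by simp) (by positivity))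
    linarith
  choose x hx X₁ X₂ hJ₁ hJ₂ hX using fun j : ℕ =>
    exists_superJets_near L₁ L₂ hmax (by positivity) (hδ j) (Nat.one_div_pos_of_nat (n := j))
  have hx_lim : Tendsto x atTop (𝓝 x₀) :=
    tendsto_iff_dist_tendsto_zero.2 (squeeze_zero (fun _ => dist_nonneg)
      (fun j => (hx j).le) tendsto_one_div_add_atTop_nhds_zero_nat)
  have hδ_lim : Tendsto (fun j : ℕ => γ * (1 / ((j : ℝ) + 1))) atTop (𝓝 0) := by
    simpa using tendsto_one_div_add_atTop_nhds_zero_nat.const_mul γ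
  have hclosed₁ := isClosed_closure (s := superJet u₁).preimage (f := fun q : E × (E →L[ℝ] E) =>
    (L₁.contact q.1, L₁.grad q.1, q.2)) (L₁.continuous_contact.fst'.prodMk
      (hK₁.continuous.fst'.prodMk continuous_snd))
  have hclosed₂ := isClosed_closure (s := superJet u₂).preimage (f := fun q : E × (E →L[ℝ] E) =>
    (L₂.contact q.1, L₂.grad q.1, q.2)) (L₂.continuous_contact.fst'.prodMk
      (hK₂.continuous.fst'.prodMk continuous_snd))
  exact exists_mem_inner_add_inner_nonpos_of_tendsto hclosed₁ hclosed₂ hx_lim hδ_lim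
    (fun j => (hJ₁ j).2) (fun j => (hJ₂ j).2) (fun j => (hJ₁ j).1.le_of_lipschitz hK₁)
    (fun j => (hJ₂ j).1.le_of_lipschitz hK₂) hX

end LasryLions

theorem exists_superJets_zero (h₁ : Continuous u₁) (h₂ : Continuous u₂)
    (hzero₁ : u₁ 0 = 0) (hzero₂ : u₂ 0 = 0) (ha : 0 < a)
    (hle : ∀ z z', u₁ z + u₂ z' ≤ a * ‖z - z'‖ ^ 2) :
    ∃ X₁ X₂ : E →L[ℝ] E, (0, 0, X₁) ∈ closure (superJet u₁) ∧
      (0, 0, X₂) ∈ closure (superJet u₂) ∧ ∀ e, ⟪X₁ e, e⟫ + ⟪X₂ e, e⟫ ≤ 0 := by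
  obtain ⟨L₁⟩ := LasryLions.nonempty (a := a) (μ := 2 * a) (ν := 6 * a) h₁
    (fun z => by simpa [hzero₂] using hle z 0) (by linarith) (by linarith) (by linarith)
  obtain ⟨L₂⟩ := LasryLions.nonempty (a := a) (μ := 2 * a) (ν := 6 * a) h₂
    (fun z => by simpa [hzero₁] using hle 0 z) (by linarith) (by linarith) (by linarith)
  have hnonpos := L₁.val_add_val_nonpos L₂ hle
  have hself₁ := L₁.self_le_val 0
  have hself₂ := L₂.self_le_val 0
  have hgrad₁ : L₁.grad 0 = 0 := L₁.grad_eq_zero_of_val_le (by linarith [hnonpos 0])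
  have hgrad₂ : L₂.grad 0 = 0 := L₂.grad_eq_zero_of_val_le (by linarith [hnonpos 0])
  simpa [LasryLions.contact, hgrad₁, hgrad₂] using
    L₁.exists_superJets_contact L₂ (fun x => by linarith [hnonpos x]) (x₀ := 0) (by linarith)

theorem exists_superJets_of_forall_add_le (h₁ : Continuous u₁) (h₂ : Continuous u₂) (ha : 0 < a)
    (hle : ∀ x y, u₁ x + u₂ y ≤ u₁ x₀ + u₂ y₀ + ⟪p, (x - x₀) - (y - y₀)⟫ +
      a * ‖(x - x₀) - (y - y₀)‖ ^ 2) :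
    ∃ X Y : E →L[ℝ] E, (x₀, p, X) ∈ closure (superJet u₁) ∧
      (y₀, -p, Y) ∈ closure (superJet u₂) ∧ ∀ e, ⟪X e, e⟫ + ⟪Y e, e⟫ ≤ 0 := by
  obtain ⟨X, Y, hX, hY, hXY⟩ := exists_superJets_zero
    (u₁ := fun z => u₁ (x₀ + z) - u₁ x₀ - ⟪p, z⟫) (u₂ := fun z => u₂ (y₀ + z) - u₂ y₀ - ⟪-p, z⟫)
    (by fun_prop) (by fun_prop) (by simp) (by simp) ha (fun z z' => by
      have h := hle (x₀ + z) (y₀ + z')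
      rw [add_sub_cancel_left, add_sub_cancel_left, inner_sub_right] at h
      rw [inner_neg_left]
      linarith)
  exact ⟨X, Y, by simpa using mem_closure_superJet_of_translate hX,
    by simpa using mem_closure_superJet_of_translate hY, hXY⟩

end Sums

section ProjectedTrace

variable {n : ℕ} {A B : EuclideanSpace ℝ (Fin n) →L[ℝ] EuclideanSpace ℝ (Fin n)}
  {η : EuclideanSpace ℝ (Fin n)}

theorem trProj_eq_sum_inner {ι : Type*} [Fintype ι]
    (b : OrthonormalBasis ι ℝ (EuclideanSpace ℝ (Fin n)))
    (A : EuclideanSpace ℝ (Fin n) →L[ℝ] EuclideanSpace ℝ (Fin n)) (η : EuclideanSpace ℝ (Fin n)) :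
    trProj A η = (∑ i, ⟪A (b i), b i⟫) - ⟪A η, η⟫ := by
  simp only [trProj, clmTrace, LinearMap.trace_eq_sum_inner _ b, real_inner_comm,
    ContinuousLinearMap.coe_coe]

theorem trProj_congr (h : ∀ e, ⟪A e, e⟫ = ⟪B e, e⟫) (η : EuclideanSpace ℝ (Fin n)) :
    trProj A η = trProj B η := by
  simp only [trProj_eq_sum_inner (EuclideanSpace.basisFun (Fin n) ℝ), h]

theorem trProj_smul (r : ℝ) (A : EuclideanSpace ℝ (Fin n) →L[ℝ] EuclideanSpace ℝ (Fin n))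
    (η : EuclideanSpace ℝ (Fin n)) : trProj (r • A) η = r * trProj A η := by
  simp only [trProj_eq_sum_inner (EuclideanSpace.basisFun (Fin n) ℝ), smul_apply,
    real_inner_smul_left, mul_sub, Finset.mul_sum]

theorem trProj_id (η : EuclideanSpace ℝ (Fin n)) :
    trProj (ContinuousLinearMap.id ℝ _) η = n - ‖η‖ ^ 2 := by
  simp [trProj_eq_sum_inner (EuclideanSpace.basisFun (Fin n) ℝ)]

theorem trProj_le_trProj (hη : ‖η‖ = 1) (h : ∀ e, ⟪A e, e⟫ ≤ ⟪B e, e⟫) :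
    trProj A η ≤ trProj B η := by
  have horth : Orthonormal ℝ
      ((↑) : ({η} : Set (EuclideanSpace ℝ (Fin n))) → EuclideanSpace ℝ (Fin n)) :=
    ⟨fun i => (mem_singleton_iff.1 i.2).symm ▸ hη, Subsingleton.pairwise⟩
  obtain ⟨u, b, hu, hb⟩ := horth.exists_orthonormalBasis_extension
  have hηu : η ∈ u := hu rfl
  have hsum := Finset.single_le_sum (f := fun i => ⟪B (b i), b i⟫ - ⟪A (b i), b i⟫)
    (fun i _ => sub_nonneg.2 (h (b i))) (Finset.mem_univ ⟨η, hηu⟩)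
  rw [Finset.sum_sub_distrib, hb] at hsum
  rw [trProj_eq_sum_inner b, trProj_eq_sum_inner b, hb]
  linarith

theorem continuous_trProj : Continuous
    fun q : (EuclideanSpace ℝ (Fin n) →L[ℝ] EuclideanSpace ℝ (Fin n)) × EuclideanSpace ℝ (Fin n) =>
      trProj q.1 q.2 := by
  simp only [trProj_eq_sum_inner (EuclideanSpace.basisFun (Fin n) ℝ)]
  fun_prop

/-- The operator `(div (Dφ/|Dφ|) + 1) |Dφ|` at a point where `φ` has the gradient `p ≠ 0` and the
Hessian `X`. -/
noncomputable def levelSetOperator (p : EuclideanSpace ℝ (Fin n))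
    (X : EuclideanSpace ℝ (Fin n) →L[ℝ] EuclideanSpace ℝ (Fin n)) : ℝ :=
  trProj X (‖p‖⁻¹ • p) + ‖p‖

theorem levelSetOperator_smul_smul {r : ℝ} (hr : 0 < r) (p : EuclideanSpace ℝ (Fin n))
    (X : EuclideanSpace ℝ (Fin n) →L[ℝ] EuclideanSpace ℝ (Fin n)) :
    levelSetOperator (r • p) (r • X) = r * levelSetOperator p X := by
  have hdir : (r * ‖p‖)⁻¹ • r • p = ‖p‖⁻¹ • p := by
    rw [smul_smul, mul_inv_rev, mul_assoc, inv_mul_cancel₀ hr.ne', mul_one]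
  rw [levelSetOperator, levelSetOperator, norm_smul, Real.norm_of_nonneg hr.le, hdir, trProj_smul,
    mul_add]

theorem levelSetOperator_le_levelSetOperator {p : EuclideanSpace ℝ (Fin n)} (hp : p ≠ 0)
    (h : ∀ e, ⟪A e, e⟫ ≤ ⟪B e, e⟫) : levelSetOperator p A ≤ levelSetOperator p B :=
  add_le_add_left (trProj_le_trProj (norm_smul_inv_norm hp) h) _

theorem continuousAt_levelSetOperator
    {q : EuclideanSpace ℝ (Fin n) × (EuclideanSpace ℝ (Fin n) →L[ℝ] EuclideanSpace ℝ (Fin n))}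
    (hq : q.1 ≠ 0) : ContinuousAt (fun q => levelSetOperator q.1 q.2) q := by
  have hnorm : ContinuousAt (fun q : EuclideanSpace ℝ (Fin n) ×
      (EuclideanSpace ℝ (Fin n) →L[ℝ] EuclideanSpace ℝ (Fin n)) => ‖q.1‖) q := by fun_prop
  have hdir := (hnorm.inv₀ (norm_ne_zero_iff.2 hq)).smul continuousAt_fst
  exact (continuous_trProj.continuousAt.comp (continuousAt_snd.prodMk hdir)).add hnorm

end ProjectedTrace

section Paraboloid

variable {n : ℕ} {p x₀ : EuclideanSpace ℝ (Fin n)}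
  {X : EuclideanSpace ℝ (Fin n) →L[ℝ] EuclideanSpace ℝ (Fin n)}

/-- The quadratic test function centred at `x₀` with slope `p` and Hessian `X`. -/
noncomputable def paraboloid (p x₀ : EuclideanSpace ℝ (Fin n))
    (X : EuclideanSpace ℝ (Fin n) →L[ℝ] EuclideanSpace ℝ (Fin n)) (x : EuclideanSpace ℝ (Fin n)) :
    ℝ :=
  ⟪p, x - x₀⟫ + 1 / 2 * ⟪X (x - x₀), x - x₀⟫

theorem contDiff_paraboloid : ContDiff ℝ 2 (paraboloid p x₀ X) := by
  have hsub : ContDiff ℝ 2 fun x : EuclideanSpace ℝ (Fin n) => x - x₀ :=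
    contDiff_id.sub contDiff_const
  exact (contDiff_const.inner ℝ hsub).add
    (contDiff_const.mul ((X.contDiff.comp hsub).inner ℝ hsub))

theorem gradient_paraboloid (x : EuclideanSpace ℝ (Fin n)) :
    gradient (paraboloid p x₀ X) x = p + ((1 / 2 : ℝ) • (X + X.adjoint)) (x - x₀) := by
  refine HasGradientAt.gradient (hasGradientAt_iff_hasFDerivAt.2 ?_)
  have hsub : HasFDerivAt (fun x : EuclideanSpace ℝ (Fin n) => x - x₀) (.id ℝ _) x :=
    (hasFDerivAt_id x).sub_const x₀
  refine (((hasFDerivAt_const p x).inner ℝ hsub).add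
    (((X.hasFDerivAt.comp x hsub).inner ℝ hsub).const_mul (1 / 2 : ℝ))).congr_fderiv ?_
  ext z
  simp only [fderivInnerCLM_apply, InnerProductSpace.toDual_apply_apply, inner_add_left,
    real_inner_smul_left, ContinuousLinearMap.adjoint_inner_left, add_apply, smul_apply,
    ContinuousLinearMap.comp_apply, ContinuousLinearMap.prod_apply, zero_apply, inner_zero_left,
    ContinuousLinearMap.id_apply, smul_eq_mul, add_zero, real_inner_comm (x - x₀) (X z),
    Function.comp_apply]

theorem gradient_paraboloid_center : gradient (paraboloid p x₀ X) x₀ = p := by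
  rw [gradient_paraboloid, sub_self, map_zero, add_zero]

theorem hess_paraboloid (x : EuclideanSpace ℝ (Fin n)) :
    hess (paraboloid p x₀ X) x = (1 / 2 : ℝ) • (X + X.adjoint) := by
  rw [hess, funext gradient_paraboloid]
  exact ((ContinuousLinearMap.hasFDerivAt _).comp x
    ((hasFDerivAt_id x).sub_const x₀)).const_add p |>.fderiv

theorem trProj_hess_paraboloid (x η : EuclideanSpace ℝ (Fin n)) :
    trProj (hess (paraboloid p x₀ X) x) η = trProj X η := by
  rw [hess_paraboloid]
  refine trProj_congr (fun e => ?_) η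
  rw [smul_apply, add_apply, real_inner_smul_left, inner_add_left,
    ContinuousLinearMap.adjoint_inner_left, real_inner_comm (X e) e]
  ring

theorem isLocalMax_sub_paraboloid {v : EuclideanSpace ℝ (Fin n) → ℝ}
    (h : (x₀, p, X) ∈ superJet v) : IsLocalMax (fun x => v x - paraboloid p x₀ X x) x₀ := by
  have hsub : Tendsto (fun x => x - x₀) (𝓝 x₀) (𝓝 0) :=
    (continuous_id.sub continuous_const).tendsto' _ _ (sub_self x₀)
  filter_upwards [hsub.eventually h] with x hx
  simp only [add_sub_cancel] at hx
  simp only [paraboloid, sub_self, map_zero, inner_zero_right]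
  linarith

end Paraboloid

section Viscosity

variable {n : ℕ} {g v w : EuclideanSpace ℝ (Fin n) → ℝ} {x p : EuclideanSpace ℝ (Fin n)}
  {X : EuclideanSpace ℝ (Fin n) →L[ℝ] EuclideanSpace ℝ (Fin n)}

theorem StatSubsol.neg_levelSetOperator_le (hv : StatSubsol g univ v) (hg : Continuous g)
    (hp : p ≠ 0) (h : (x, p, X) ∈ closure (superJet v)) : -levelSetOperator p X ≤ g x := by
  have hlim : Tendsto (fun J : EuclideanSpace ℝ (Fin n) × EuclideanSpace ℝ (Fin n) × _ =>
      -levelSetOperator J.2.1 J.2.2) (𝓝 (x, p, X)) (𝓝 (-levelSetOperator p X)) :=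
    ((continuousAt_levelSetOperator (q := (p, X)) hp).tendsto.comp
      (continuous_snd.tendsto (x, p, X))).neg
  refine le_of_tendsto_of_tendsto_of_frequently hlim ((hg.comp continuous_fst).tendsto (x, p, X))
    ((mem_closure_iff_frequently.1 h).and_eventually
      ((continuousAt_fst.comp continuousAt_snd).eventually_ne hp) |>.mono ?_)
  rintro ⟨y, q, Y⟩ ⟨hjet, hq⟩
  have htest := (hv _ contDiff_paraboloid y (mem_univ y) (isLocalMax_sub_paraboloid hjet)).1
  rw [gradient_paraboloid_center, trProj_hess_paraboloid] at htest
  exact htest hq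

theorem StatSupersol.le_neg_levelSetOperator (hw : StatSupersol g univ w) (hg : Continuous g)
    (hp : p ≠ 0) (h : (x, p, X) ∈ closure (superJet fun y => -w y)) :
    g x ≤ -levelSetOperator (-p) (-X) := by
  have hlim : Tendsto (fun J : EuclideanSpace ℝ (Fin n) × EuclideanSpace ℝ (Fin n) × _ =>
      -levelSetOperator (-J.2.1) (-J.2.2)) (𝓝 (x, p, X)) (𝓝 (-levelSetOperator (-p) (-X))) :=
    ((continuousAt_levelSetOperator (q := (-p, -X)) (neg_ne_zero.2 hp)).tendsto.comp
      (continuous_snd.neg.tendsto (x, p, X))).neg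
  refine le_of_tendsto_of_tendsto_of_frequently ((hg.comp continuous_fst).tendsto (x, p, X)) hlim
    ((mem_closure_iff_frequently.1 h).and_eventually
      ((continuousAt_fst.comp continuousAt_snd).eventually_ne hp) |>.mono ?_)
  rintro ⟨y, q, Y⟩ ⟨hjet, hq⟩
  have hmin : IsLocalMin (fun z => w z - paraboloid (-q) y (-Y) z) y := by
    refine (isLocalMax_sub_paraboloid hjet).neg.congr (.of_forall fun z => ?_)
    simp only [paraboloid, neg_apply, inner_neg_left]
    ring
  have htest := (hw _ contDiff_paraboloid y (mem_univ y) hmin).1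
  rw [gradient_paraboloid_center, trProj_hess_paraboloid] at htest
  exact htest (neg_ne_zero.2 hq)

theorem StatSubsol.nonneg_of_forall_mem_superJet (hv : StatSubsol g univ v)
    (h : ∀ ε : ℝ, 0 < ε → (x, 0, ε • ContinuousLinearMap.id ℝ _) ∈ superJet v) : 0 ≤ g x := by
  have hlim : Tendsto (fun ε : ℝ => -(ε * n)) (𝓝[>] 0) (𝓝 0) :=
    (Continuous.tendsto' (by fun_prop) 0 0 (by simp)).mono_left nhdsWithin_le_nhds
  refine le_of_tendsto hlim ?_
  filter_upwards [self_mem_nhdsWithin] with ε hε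
  obtain ⟨η, -, hη⟩ := (hv _ contDiff_paraboloid x (mem_univ x)
    (isLocalMax_sub_paraboloid (h ε hε))).2 gradient_paraboloid_center
  rw [trProj_hess_paraboloid, trProj_smul, trProj_id] at hη
  have : 0 ≤ ε * ‖η‖ ^ 2 := mul_nonneg (le_of_lt hε) (sq_nonneg _)
  linarith

theorem StatSubsol.const_mul {O : Set (EuclideanSpace ℝ (Fin n))} {r : ℝ} (hr : 0 < r)
    (hv : StatSubsol g O v) : StatSubsol (fun x => r * g x) O fun x => r * v x := by
  intro φ hφ x hx hmax
  have hgrad : gradient (r⁻¹ • φ) = r⁻¹ • gradient φ := by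
    ext1 y
    rw [gradient, fderiv_const_smul_field, Pi.smul_apply, map_smul]
    rfl
  have hhess : hess (r⁻¹ • φ) x = r⁻¹ • hess φ x := by
    rw [hess, hgrad, fderiv_const_smul_field]
    rfl
  have hmax' : IsLocalMax (fun y => v y - (r⁻¹ • φ) y) x := by
    filter_upwards [hmax] with y hy
    simp only [Pi.smul_apply, smul_eq_mul]
    have := mul_le_mul_of_nonneg_left hy (inv_nonneg.2 hr.le)
    simpa only [mul_sub, inv_mul_cancel_left₀ hr.ne'] using this
  have htest := hv (r⁻¹ • φ) (hφ.const_smul r⁻¹) x hx hmax'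
  rw [hgrad, hhess, Pi.smul_apply] at htest
  refine ⟨fun hp => ?_, fun hp => ?_⟩
  · have hle : -levelSetOperator _ _ ≤ g x := htest.1 (smul_ne_zero (inv_ne_zero hr.ne') hp)
    rw [levelSetOperator_smul_smul (inv_pos.2 hr), ← mul_neg, inv_mul_le_iff₀ hr] at hle
    exact hle
  · obtain ⟨η, hη, hle⟩ := htest.2 (by rw [hp, smul_zero])
    rw [trProj_smul, ← mul_neg, inv_mul_le_iff₀ hr] at hle
    exact ⟨η, hη, hle⟩

end Viscosity

section Penalty

variable {E : Type*} [NormedAddCommGroup E]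

/-- A penalty that is quartic at the origin, so that its Hessian vanishes there, and quadratic at
infinity, so that its second derivative stays bounded. -/
noncomputable def quarticPenalty (h : E) : ℝ :=
  ‖h‖ ^ 4 / (1 + ‖h‖ ^ 2)

theorem quarticPenalty_zero : quarticPenalty (0 : E) = 0 := by
  simp [quarticPenalty]

theorem quarticPenalty_nonneg (h : E) : 0 ≤ quarticPenalty h := by
  unfold quarticPenalty
  positivity

theorem quarticPenalty_eq_zero {h : E} (hh : quarticPenalty h = 0) : h = 0 :=
  norm_eq_zero.1 (pow_eq_zero_iff four_ne_zero |>.1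
    ((div_eq_zero_iff.1 hh).resolve_right (by positivity)))

theorem quarticPenalty_le_norm_pow (h : E) : quarticPenalty h ≤ ‖h‖ ^ 4 :=
  div_le_self (by positivity) (le_add_of_nonneg_right (sq_nonneg _))

theorem quarticPenalty_eq (h : E) : quarticPenalty h = ‖h‖ ^ 2 - 1 + 1 / (1 + ‖h‖ ^ 2) := by
  unfold quarticPenalty
  field_simp
  ring

theorem norm_sq_sub_one_le_quarticPenalty (h : E) : ‖h‖ ^ 2 - 1 ≤ quarticPenalty h := by
  rw [quarticPenalty_eq]
  exact le_add_of_nonneg_right (by positivity)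

theorem continuous_quarticPenalty : Continuous (quarticPenalty : E → ℝ) :=
  (continuous_norm.pow 4).div (by fun_prop) fun h => by positivity

theorem isBounded_setOf_quarticPenalty_le {u w : E → ℝ} {b₁ b₂ M₁ M₂ : ℝ} (hb₂ : 0 ≤ b₂)
    (hb : b₂ < b₁) (hu : ∀ x, u x ≤ -b₁ * ‖x‖ + M₁) (hw : ∀ x, -b₂ * ‖x‖ - M₂ ≤ w x) :
    Bornology.IsBounded {z : E × E | 0 ≤ u z.1 - w z.2 - quarticPenalty (z.1 - z.2)} := by
  have hb' : 0 < b₁ - b₂ := sub_pos.2 hb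
  set K := M₁ + M₂ + 1 + (b₂ + 1) ^ 2 / 4
  have hK : ∀ z ∈ {z : E × E | 0 ≤ u z.1 - w z.2 - quarticPenalty (z.1 - z.2)},
      (b₁ - b₂) * ‖z.1‖ + ‖z.1 - z.2‖ ≤ K := by
    rintro ⟨x, y⟩ (hz : 0 ≤ u x - w y - quarticPenalty (x - y))
    have htri : b₂ * ‖y‖ ≤ b₂ * (‖x‖ + ‖x - y‖) := by
      gcongr
      simpa using norm_sub_le x (x - y)
    change (b₁ - b₂) * ‖x‖ + ‖x - y‖ ≤ M₁ + M₂ + 1 + (b₂ + 1) ^ 2 / 4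
    linarith [hu x, hw y, norm_sq_sub_one_le_quarticPenalty (x - y),
      sq_nonneg (‖x - y‖ - (b₂ + 1) / 2)]
  refine isBounded_iff_forall_norm_le.2 ⟨K / (b₁ - b₂) + K, fun z hz => ?_⟩
  have hfst : ‖z.1‖ ≤ K / (b₁ - b₂) :=
    (le_div_iff₀' hb').2 (by linarith [hK z hz, norm_nonneg (z.1 - z.2)])
  have hsub : ‖z.1 - z.2‖ ≤ K := by
    linarith [hK z hz, mul_nonneg hb'.le (norm_nonneg z.1)]
  have htri : ‖z.2‖ ≤ ‖z.1‖ + ‖z.1 - z.2‖ := by simpa using norm_sub_le z.1 (z.1 - z.2)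
  exact norm_prod_le_iff.2 ⟨by linarith [norm_nonneg (z.1 - z.2)], by linarith⟩

variable [InnerProductSpace ℝ E]

/-- The gradient of `quarticPenalty` at `ξ`. -/
noncomputable def quarticPenaltySlope (ξ : E) : E :=
  (2 * (1 - 1 / (1 + ‖ξ‖ ^ 2) ^ 2)) • ξ

theorem quarticPenaltySlope_ne_zero {ξ : E} (hξ : ξ ≠ 0) : quarticPenaltySlope ξ ≠ 0 := by
  have hsq : 0 < ‖ξ‖ ^ 2 := pow_pos (norm_pos_iff.2 hξ) 2
  have hlt : 1 / (1 + ‖ξ‖ ^ 2) ^ 2 < 1 := by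
    rw [div_lt_one (by positivity)]
    exact one_lt_pow₀ (by linarith) two_ne_zero
  exact smul_ne_zero (mul_pos two_pos (sub_pos.2 hlt)).ne' hξ

theorem quarticPenalty_add_le (ξ h : E) :
    quarticPenalty (ξ + h) ≤ quarticPenalty ξ + ⟪quarticPenaltySlope ξ, h⟫ + 3 * ‖h‖ ^ 2 := by
  have hpol : ⟪ξ, h⟫ = (‖ξ + h‖ ^ 2 - ‖ξ‖ ^ 2 - ‖h‖ ^ 2) / 2 := by
    linarith [norm_add_sq_real ξ h]
  have hdiff : (‖ξ + h‖ ^ 2 - ‖ξ‖ ^ 2) ^ 2 ≤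
      2 * ‖h‖ ^ 2 * ((1 + ‖ξ‖ ^ 2) ^ 2 * (1 + ‖ξ + h‖ ^ 2)) := by
    have hsub : (‖ξ + h‖ - ‖ξ‖) ^ 2 ≤ ‖h‖ ^ 2 := by
      refine sq_le_sq.2 ?_
      simpa using abs_norm_sub_norm_le (ξ + h) ξ
    calc (‖ξ + h‖ ^ 2 - ‖ξ‖ ^ 2) ^ 2
        = (‖ξ + h‖ - ‖ξ‖) ^ 2 * (‖ξ + h‖ + ‖ξ‖) ^ 2 := by ring
      _ ≤ ‖h‖ ^ 2 * (2 * (‖ξ + h‖ ^ 2 + ‖ξ‖ ^ 2)) := by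
        gcongr
        exact add_sq_le
      _ = 2 * ‖h‖ ^ 2 * (‖ξ + h‖ ^ 2 + ‖ξ‖ ^ 2) := by ring
      _ ≤ 2 * ‖h‖ ^ 2 * ((1 + ‖ξ‖ ^ 2) ^ 2 * (1 + ‖ξ + h‖ ^ 2)) := by
        gcongr
        have : 0 ≤ 1 + ‖ξ‖ ^ 2 + ‖ξ‖ ^ 4 + ‖ξ‖ ^ 4 * ‖ξ + h‖ ^ 2 +
          2 * ‖ξ‖ ^ 2 * ‖ξ + h‖ ^ 2 := by positivity
        linarith
  have hdefect : 3 * ‖h‖ ^ 2 + quarticPenalty ξ + ⟪quarticPenaltySlope ξ, h⟫ -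
      quarticPenalty (ξ + h) = 2 * ‖h‖ ^ 2 + ‖h‖ ^ 2 / (1 + ‖ξ‖ ^ 2) ^ 2 -
        (‖ξ + h‖ ^ 2 - ‖ξ‖ ^ 2) ^ 2 / ((1 + ‖ξ‖ ^ 2) ^ 2 * (1 + ‖ξ + h‖ ^ 2)) := by
    rw [quarticPenalty_eq, quarticPenalty_eq, quarticPenaltySlope, real_inner_smul_left, hpol]
    field_simp
    ring
  have hquot := (div_le_iff₀ (by positivity)).2 hdiff
  have : 0 ≤ ‖h‖ ^ 2 / (1 + ‖ξ‖ ^ 2) ^ 2 := by positivity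
  linarith

end Penalty

section Doubling

variable {n : ℕ} {g₁ g₂ v w : EuclideanSpace ℝ (Fin n) → ℝ} {x₀ y₀ : EuclideanSpace ℝ (Fin n)}
  {α : ℝ}

theorem StatSubsol.nonneg_of_le_quarticPenalty (hv : StatSubsol g₁ univ v)
    (hle : ∀ x, v x ≤ v x₀ + α * quarticPenalty (x - x₀)) : 0 ≤ g₁ x₀ := by
  refine hv.nonneg_of_forall_mem_superJet fun ε hε => ?_
  have hlim : Tendsto (fun d : EuclideanSpace ℝ (Fin n) => |α| * ‖d‖ ^ 2) (𝓝 0) (𝓝 0) :=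
    Continuous.tendsto' (by fun_prop) 0 0 (by simp)
  filter_upwards [hlim.eventually_le_const (half_pos hε)] with d hd
  simp only [inner_zero_left, add_zero, smul_apply, ContinuousLinearMap.id_apply,
    real_inner_smul_left, real_inner_self_eq_norm_sq]
  calc v (x₀ + d) ≤ v x₀ + α * quarticPenalty d := by simpa using hle (x₀ + d)
    _ ≤ v x₀ + |α| * ‖d‖ ^ 4 := by
      gcongr
      · exact quarticPenalty_nonneg d
      · exact le_abs_self α
      · exact quarticPenalty_le_norm_pow d
    _ = v x₀ + |α| * ‖d‖ ^ 2 * ‖d‖ ^ 2 := by ring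
    _ ≤ v x₀ + ε / 2 * ‖d‖ ^ 2 := by gcongr
    _ = v x₀ + 1 / 2 * (ε * ‖d‖ ^ 2) := by ring

theorem StatSubsol.le_of_forall_sub_quarticPenalty_le (hv : StatSubsol g₁ univ v)
    (hw : StatSupersol g₂ univ w) (hg₁ : Continuous g₁) (hg₂ : Continuous g₂)
    (hvc : Continuous v) (hwc : Continuous w) (hα : 0 < α) (hne : x₀ ≠ y₀)
    (hmax : ∀ x y, v x - w y - α * quarticPenalty (x - y) ≤
      v x₀ - w y₀ - α * quarticPenalty (x₀ - y₀)) : g₂ y₀ ≤ g₁ x₀ := by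
  set p := α • quarticPenaltySlope (x₀ - y₀)
  have hp : p ≠ 0 := smul_ne_zero hα.ne' (quarticPenaltySlope_ne_zero (sub_ne_zero.2 hne))
  have hle : ∀ x y, v x + -w y ≤ v x₀ + -w y₀ + ⟪p, (x - x₀) - (y - y₀)⟫ +
      α * 3 * ‖(x - x₀) - (y - y₀)‖ ^ 2 := by
    intro x y
    have hadd := quarticPenalty_add_le (x₀ - y₀) ((x - x₀) - (y - y₀))
    rw [show x₀ - y₀ + ((x - x₀) - (y - y₀)) = x - y by abel] at hadd
    rw [real_inner_smul_left]
    linarith [hmax x y, mul_le_mul_of_nonneg_left hadd hα.le]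
  obtain ⟨X, Y, hX, hY, hXY⟩ :=
    exists_superJets_of_forall_add_le hvc hwc.neg (mul_pos hα three_pos) hle
  calc g₂ y₀ ≤ -levelSetOperator p (-Y) := by
        simpa using hw.le_neg_levelSetOperator hg₂ (neg_ne_zero.2 hp) hY
    _ ≤ -levelSetOperator p X := neg_le_neg <| levelSetOperator_le_levelSetOperator hp fun e => by
        rw [neg_apply, inner_neg_left]
        linarith [hXY e]
    _ ≤ g₁ x₀ := hv.neg_levelSetOperator_le hg₁ hp hX

end Doubling

section PenaltyMethod

variable {Z : Type*} [TopologicalSpace Z] {F Ψ : Z → ℝ} {z₀ : Z}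

theorem exists_forall_sub_mul_le {α : ℝ} (hα : 1 ≤ α) (hF : Continuous F) (hΨ : Continuous Ψ)
    (hΨ0 : ∀ z, 0 ≤ Ψ z) (hK : IsCompact {z | 0 ≤ F z - Ψ z}) (h₀ : Ψ z₀ = 0) (hF₀ : 0 ≤ F z₀) :
    ∃ z ∈ {z | 0 ≤ F z - Ψ z}, ∀ q, F q - α * Ψ q ≤ F z - α * Ψ z := by
  have hz₀ : z₀ ∈ {z | 0 ≤ F z - Ψ z} := by simpa [h₀] using hF₀
  obtain ⟨z, hz, hmax⟩ :=
    hK.exists_isMaxOn ⟨z₀, hz₀⟩ (hF.sub (continuous_const.mul hΨ)).continuousOn (f := F - α • Ψ)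
  refine ⟨z, hz, fun q => ?_⟩
  by_cases hq : 0 ≤ F q - Ψ q
  · exact hmax hq
  · have hz₀z : F z₀ - α * Ψ z₀ ≤ F z - α * Ψ z := hmax hz₀
    rw [h₀] at hz₀z
    linarith [mul_le_mul_of_nonneg_right hα (hΨ0 q)]

theorem exists_mem_closure_setOf_forall_sub_mul_le (hF : Continuous F) (hΨ : Continuous Ψ)
    (hΨ0 : ∀ z, 0 ≤ Ψ z) (hK : IsCompact {z | 0 ≤ F z - Ψ z}) (h₀ : Ψ z₀ = 0) (hF₀ : 0 ≤ F z₀) :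
    ∃ z ∈ closure {z | ∃ α > 0, ∀ q, F q - α * Ψ q ≤ F z - α * Ψ z}, Ψ z = 0 ∧ F z₀ ≤ F z := by
  choose m hmK hmax using fun j : ℕ =>
    exists_forall_sub_mul_le (le_add_of_nonneg_left j.cast_nonneg) hF hΨ hΨ0 hK h₀ hF₀
  have hbase (j : ℕ) : F z₀ + (j + 1) * Ψ (m j) ≤ F (m j) := by
    linarith [hmax j z₀, mul_eq_zero_of_right ((j : ℝ) + 1) h₀]
  obtain ⟨z, -, hz⟩ := hK.exists_mapClusterPt (f := atTop) (u := m)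
    (tendsto_principal.2 (.of_forall hmK))
  obtain ⟨B, hB⟩ := hK.bddAbove_image hF.continuousOn
  have hbound (j : ℕ) : Ψ (m j) ≤ (B - F z₀) / (j + 1) := by
    rw [le_div_iff₀' (by positivity)]
    linarith [hbase j, hB (mem_image_of_mem F (hmK j))]
  have hlim : Tendsto (Ψ ∘ m) atTop (𝓝 0) :=
    squeeze_zero (fun j => hΨ0 (m j)) hbound
      (tendsto_const_nhds.div_atTop (tendsto_natCast_atTop_atTop.atTop_add tendsto_const_nhds))
  have hclosed {S : Set Z} (hS : ∀ j, m j ∈ S) : z ∈ closure S :=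
    mem_closure_iff_clusterPt.2 (ClusterPt.mono hz (tendsto_principal.2 (.of_forall hS)))
  refine ⟨z, hclosed fun j => ⟨j + 1, by positivity, hmax j⟩, ?_, ?_⟩
  · have hΨz : MapClusterPt (Ψ z) atTop (Ψ ∘ m) := hz.continuousAt_comp hΨ.continuousAt
    exact eq_of_nhds_neBot (hΨz.neBot.mono (inf_le_inf_left _ hlim))
  · refine (isClosed_le continuous_const hF).closure_subset (hclosed fun j => ?_)
    exact le_of_add_le_of_nonneg_left (hbase j) (mul_nonneg (by positivity) (hΨ0 (m j)))

end PenaltyMethod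

section Comparison

variable {n : ℕ} {g v w : EuclideanSpace ℝ (Fin n) → ℝ} {a : ℝ}

theorem isBounded_setOf_quarticPenalty_le_of_growth {r : ℝ} (hr : 1 < r) (ha : 0 < a)
    (hv : ∀ b < a, ∃ M, ∀ x, v x ≤ -b * ‖x‖ + M) (hw : ∀ b > a, ∃ M, ∀ x, -b * ‖x‖ - M ≤ w x) :
    Bornology.IsBounded {z : EuclideanSpace ℝ (Fin n) × EuclideanSpace ℝ (Fin n) |
      0 ≤ r * v z.1 - w z.2 - quarticPenalty (z.1 - z.2)} := by
  have hr0 : 0 < r := one_pos.trans hr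
  obtain ⟨b₂, hab₂, hb₂⟩ := exists_between (lt_mul_of_one_lt_left ha hr)
  obtain ⟨b₁, hb₁₂, hb₁⟩ := exists_between ((div_lt_iff₀' hr0).2 hb₂)
  obtain ⟨M₁, hM₁⟩ := hv b₁ hb₁
  obtain ⟨M₂, hM₂⟩ := hw b₂ hab₂
  refine isBounded_setOf_quarticPenalty_le (M₁ := r * M₁) (ha.trans hab₂).le
    ((div_lt_iff₀' hr0).1 hb₁₂) (u := fun x => r * v x) (fun x => ?_) hM₂
  linarith [mul_le_mul_of_nonneg_left (hM₁ x) hr0.le]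

theorem exists_eq_zero_and_le (hg : Continuous g) (hg0 : ∀ x, g x ≤ 0) (hvc : Continuous v)
    (hwc : Continuous w) (hv : StatSubsol g univ v) (hw : StatSupersol g univ w) {r : ℝ}
    (hr : 1 < r)
    (hbdd : Bornology.IsBounded {z : EuclideanSpace ℝ (Fin n) × EuclideanSpace ℝ (Fin n) |
      0 ≤ r * v z.1 - w z.2 - quarticPenalty (z.1 - z.2)})
    {x₀ : EuclideanSpace ℝ (Fin n)} (hx₀ : 0 ≤ r * v x₀ - w x₀) :
    ∃ x, g x = 0 ∧ r * v x₀ - w x₀ ≤ r * v x - w x := by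
  have hr0 : 0 < r := one_pos.trans hr
  have hF : Continuous fun z : EuclideanSpace ℝ (Fin n) × EuclideanSpace ℝ (Fin n) =>
      r * v z.1 - w z.2 := by fun_prop
  have hΨ : Continuous fun z : EuclideanSpace ℝ (Fin n) × EuclideanSpace ℝ (Fin n) =>
      quarticPenalty (z.1 - z.2) := continuous_quarticPenalty.comp continuous_sub
  have hK := Metric.isCompact_of_isClosed_isBounded
    (isClosed_le continuous_const (hF.sub hΨ)) hbdd
  obtain ⟨⟨x, y⟩, hz, hΨz, hle⟩ := exists_mem_closure_setOf_forall_sub_mul_le (z₀ := (x₀, x₀)) hF hΨ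
    (fun z => quarticPenalty_nonneg _) hK (by simp [quarticPenalty_zero]) hx₀
  obtain rfl : x = y := sub_eq_zero.1 (quarticPenalty_eq_zero hΨz)
  have hgx : g x ≤ r * g x := by
    refine closure_minimal (t := {z | g z.2 ≤ r * g z.1}) ?_ (isClosed_le (by fun_prop)
      (by fun_prop)) hz
    rintro ⟨x, y⟩ ⟨α, hα, hmax⟩
    rcases eq_or_ne x y with rfl | hne
    · refine (hg0 x).trans ((hv.const_mul hr0).nonneg_of_le_quarticPenalty (α := α) fun y => ?_)
      have := hmax (y, x)
      rw [sub_self, quarticPenalty_zero] at this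
      linarith
    · exact (hv.const_mul hr0).le_of_forall_sub_quarticPenalty_le hw (hg.const_mul r) hg
        (hvc.const_mul r) hwc hα hne fun x y => hmax (x, y)
  exact ⟨x, le_antisymm (hg0 x) (nonneg_of_mul_nonneg_right (by linarith) (sub_pos.2 hr)), hle⟩

theorem stmt_11_general (hg : Continuous g) (hg0 : ∀ x, g x ≤ 0) (hvc : Continuous v)
    (hwc : Continuous w) (hv : StatSubsol g univ v) (hw : StatSupersol g univ w) (ha : 0 < a)
    (hvgrowth : ∀ b < a, ∃ M, ∀ x, v x ≤ -b * ‖x‖ + M)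
    (hwgrowth : ∀ b > a, ∃ M, ∀ x, -b * ‖x‖ - M ≤ w x)
    (hle : ∀ x, g x = 0 → v x ≤ w x) (x : EuclideanSpace ℝ (Fin n)) : v x ≤ w x := by
  obtain ⟨M, hM⟩ := hvgrowth 0 ha
  have hscaled : ∀ τ > 0, (1 + τ) * v x - w x ≤ τ * max M 0 := by
    intro τ hτ
    by_contra! hlt
    have hr : 1 < 1 + τ := lt_add_of_pos_right 1 hτ
    obtain ⟨y, hgy, hxy⟩ := exists_eq_zero_and_le hg hg0 hvc hwc hv hw hr
      (isBounded_setOf_quarticPenalty_le_of_growth hr ha hvgrowth hwgrowth)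
      ((mul_nonneg hτ.le (le_max_right M 0)).trans hlt.le)
    have hvy : v y ≤ max M 0 := le_max_of_le_left (by simpa using hM y)
    linarith [hle y hgy, mul_le_mul_of_nonneg_left hvy hτ.le]
  have hleft : Tendsto (fun τ : ℝ => (1 + τ) * v x - w x) (𝓝[>] 0) (𝓝 (v x - w x)) :=
    (Continuous.tendsto' (by fun_prop) 0 _ (by simp)).mono_left nhdsWithin_le_nhds
  have hright : Tendsto (fun τ : ℝ => τ * max M 0) (𝓝[>] 0) (𝓝 0) :=
    ((continuous_id.mul continuous_const).tendsto' 0 0 (zero_mul _)).mono_left nhdsWithin_le_nhds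
  exact sub_nonpos.1 (le_of_tendsto_of_tendsto hleft hright
    (eventually_nhdsWithin_of_forall hscaled))

end Comparison

theorem exists_forall_mul_log_add_one_le {k θ : ℝ} (hk : 0 < k) (hθ : 0 < θ) :
    ∃ M, ∀ t, 0 ≤ t → k * Real.log (t + 1) ≤ θ * t + M := by
  refine ⟨θ - k - k * Real.log (θ / k), fun t ht => ?_⟩
  have hlog : Real.log (θ / k * (t + 1)) ≤ θ / k * (t + 1) - 1 :=
    Real.log_le_sub_one_of_pos (by positivity)
  rw [Real.log_mul (div_pos hθ hk).ne' (by positivity)] at hlog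
  have hmul := mul_le_mul_of_nonneg_left hlog hk.le
  have hcancel : k * (θ / k * (t + 1) - 1) = θ * (t + 1) - k := by field_simp
  linarith

theorem exists_neg_mul_norm_sub_le_of_log_growth {E : Type*} [NormedAddCommGroup E] {u : E → ℝ}
    {a b k C : ℝ} (hk : 0 < k) (hab : a < b)
    (hu : ∀ x, -a * ‖x‖ - k * Real.log (‖x‖ + 1) - C ≤ u x) :
    ∃ M, ∀ x, -b * ‖x‖ - M ≤ u x := by
  obtain ⟨M, hM⟩ := exists_forall_mul_log_add_one_le hk (sub_pos.2 hab)
  exact ⟨M + C, fun x => by linarith [hu x, hM ‖x‖ (norm_nonneg x)]⟩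

/-- Comparison principle for the stationary problem
`-(div(Dv/|Dv|)+1)|Dv| = f - c` in `ℝⁿ` within the class `Γ_f` of functions with the
growth `-c|x| - c(n-1)log(|x|+1) - C ≤ · ≤ -c|x| + C`: if the subsolution `v` is below
the supersolution `w` on `U = {f = max f}` (which contains a closed ball of radius
`n-1`), then `v ≤ w` everywhere. -/
theorem stmt_11 (n : ℕ) (hn : 2 ≤ n)
    (f : EuclideanSpace ℝ (Fin n) → ℝ) (hfC1 : ContDiff ℝ 1 f)
    (hfnonneg : ∀ x, 0 ≤ f x) (hfne : ∃ x, f x ≠ 0) (hfsupp : HasCompactSupport f)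
    (c : ℝ) (hc : IsGreatest (Set.range f) c) (hcpos : 0 < c)
    (hball : ∃ x₀ : EuclideanSpace ℝ (Fin n),
      Metric.closedBall x₀ ((n : ℝ) - 1) ⊆ {x : EuclideanSpace ℝ (Fin n) | f x = c})
    (v w : EuclideanSpace ℝ (Fin n) → ℝ) (hvcont : Continuous v) (hwcont : Continuous w)
    (hv : StatSubsol (fun x => f x - c) Set.univ v)
    (hw : StatSupersol (fun x => f x - c) Set.univ w)
    (C : ℝ) (hCpos : 0 < C)
    (hvgrowth : ∀ x, -c * ‖x‖ - c * ((n : ℝ) - 1) * Real.log (‖x‖ + 1) - C ≤ v x ∧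
      v x ≤ -c * ‖x‖ + C)
    (hwgrowth : ∀ x, -c * ‖x‖ - c * ((n : ℝ) - 1) * Real.log (‖x‖ + 1) - C ≤ w x ∧
      w x ≤ -c * ‖x‖ + C)
    (hle : ∀ x ∈ {x : EuclideanSpace ℝ (Fin n) | f x = c}, v x ≤ w x) :
    ∀ x, v x ≤ w x := by
  have hn1 : 0 < (n : ℝ) - 1 := sub_pos.2 (by exact_mod_cast hn)
  exact stmt_11_general (g := fun x => f x - c) (hfC1.continuous.sub continuous_const)
    (fun x => sub_nonpos.2 (hc.2 (mem_range_self x))) hvcont hwcont hv hw hcpos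
    (fun b hb => ⟨C, fun x => (hvgrowth x).2.trans (by gcongr)⟩)
    (fun b hb => exists_neg_mul_norm_sub_le_of_log_growth (mul_pos hcpos hn1) hb
      fun x => (hwgrowth x).1)
    (fun x hx => hle x (sub_eq_zero.1 hx))
end

section
/- Let a > 0 and let U := ⋃_{s ∈ [-a,a]} B̄((s,0),1) ⊂ ℝ² be the stadium-shaped set, with interior U°. Define v : U → ℝ by v(x₁,x₂) := min(0, √(1 - x₂²) - x₁) (equivalently, v(x) = 0 when x₁ ≤ 0 or |x| ≤ 1, and v(x) = √(1-x₂²) - x₁ otherwise). Then v is continuous on U, v = 0 on the unit ball B(0,1), v is not identically 0 on U°, and v is a viscosity solution of -(div(Dv/|Dv|)+1)|Dv| = 0 in U°; moreover, for every λ > 0 the function λ·v is also such a viscosity solution, so this equation has infinitely many pairwise distinct continuous solutions on U° vanishing on B(0,1) but not identically zero. -/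
open Set Filter Topology
open scoped RealInnerProductSpace

/-- The point `(s, 0) ∈ ℝ²`. -/
noncomputable def pt (s : ℝ) : EuclideanSpace ℝ (Fin 2) :=
  (WithLp.equiv 2 (Fin 2 → ℝ)).symm ![s, 0]

/-- The stadium-shaped set `U = ⋃_{s ∈ [-a,a]} B̄((s,0),1)`. -/
def stadium (a : ℝ) : Set (EuclideanSpace ℝ (Fin 2)) :=
  ⋃ s ∈ Set.Icc (-a) a, Metric.closedBall (pt s) 1

/-- `v(x) = min(0, √(1-x₂²) - x₁)`. -/
noncomputable def vStadium (x : EuclideanSpace ℝ (Fin 2)) : ℝ :=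
  min 0 (Real.sqrt (1 - (x 1) ^ 2) - x 0)

/-!
The equation is the level-set equation of curves whose curvature is that of the unit circle, and
every level set of `v` through a point of the open strip `|x₂| < 1` contains a translated arc of
that circle. If a test function `φ` touches `v` at `x`, then `φ` restricted to the arc
`t ↦ x + (ν t - ν θ)`, where `ν t = (cos t, sin t)`, has an extremum at `θ`. The first derivative
gives `Dφ ⊥ τ` for the tangent `τ = ν'(θ)`, and the second derivative `D²φ(τ, τ) - Dφ · ν` has a
sign. In the plane `tr((I - η ⊗ η) D²φ) = D²φ(τ, τ)` for the unit vectors `η ⊥ τ`, so for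
subsolutions `-|Dφ| ≤ Dφ · ν` suffices. For supersolutions equality is needed: since `ν · e₁ > 0`
and `v` does not increase in the direction `e₁`, `Dφ` is a nonpositive multiple of `ν`.
-/

section SecondDerivativeTest

variable {f : ℝ → ℝ} {x : ℝ}

/- If the second derivative were negative, `x` would also be a local maximum, so `f` would be
locally constant. -/
theorem deriv_deriv_nonneg_of_isLocalMin (hmin : IsLocalMin f x) (hf : ContinuousAt f x) :
    0 ≤ deriv (deriv f) x := by
  by_contra! hneg
  have hmax : IsLocalMax f x := isLocalMax_of_deriv_deriv_neg hneg hmin.deriv_eq_zero hf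
  have hconst : f =ᶠ[𝓝 x] fun _ => f x := by
    filter_upwards [hmin, hmax] with y hy hy' using le_antisymm hy' hy
  have hzero : deriv (deriv f) x = 0 := by simpa using hconst.deriv.deriv_eq
  exact hneg.ne hzero

theorem deriv_deriv_nonpos_of_isLocalMax (hmax : IsLocalMax f x) (hf : ContinuousAt f x) :
    deriv (deriv f) x ≤ 0 := by
  simpa [deriv.fun_neg'] using deriv_deriv_nonneg_of_isLocalMin hmax.neg hf.neg

end SecondDerivativeTest

section TouchingFunctions

variable {X : Type*} [TopologicalSpace X] {v φ : X → ℝ} {x : X}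

theorem isLocalMinOn_superlevel_of_isLocalMax_sub (h : IsLocalMax (fun y => v y - φ y) x) :
    IsLocalMinOn φ {y | v x ≤ v y} x := by
  filter_upwards [h.filter_mono nhdsWithin_le_nhds, self_mem_nhdsWithin] with y hy (hv : v x ≤ v y)
  linarith

theorem isLocalMaxOn_sublevel_of_isLocalMin_sub (h : IsLocalMin (fun y => v y - φ y) x) :
    IsLocalMaxOn φ {y | v y ≤ v x} x := by
  filter_upwards [h.filter_mono nhdsWithin_le_nhds, self_mem_nhdsWithin] with y hy (hv : v y ≤ v x)
  linarith

end TouchingFunctions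

section Gradient

variable {F : Type*} [NormedAddCommGroup F] [InnerProductSpace ℝ F] [CompleteSpace F] {φ : F → ℝ}

theorem differentiable_gradient (hφ : ContDiff ℝ 2 φ) : Differentiable ℝ (gradient φ) :=
  (InnerProductSpace.toDual ℝ F).symm.toContinuousLinearEquiv.differentiable.comp
    ((hφ.fderiv_right (m := 1) (by norm_num)).differentiable one_ne_zero)

theorem deriv_comp_curve {γ γ' : ℝ → F} (hφ : Differentiable ℝ φ)
    (hγ : ∀ t, HasDerivAt γ (γ' t) t) :
    deriv (φ ∘ γ) = fun t => ⟪gradient φ (γ t), γ' t⟫ := by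
  ext t
  rw [((hφ (γ t)).hasFDerivAt.comp_hasDerivAt t (hγ t)).deriv, inner_gradient_left]

end Gradient

section Orthonormal

variable {𝕜 E : Type*} [RCLike 𝕜] [NormedAddCommGroup E] [InnerProductSpace 𝕜 E]

theorem exists_orthonormalBasis_coe_eq [FiniteDimensional 𝕜 E] {ι : Type*} [Fintype ι] {v : ι → E}
    (hv : Orthonormal 𝕜 v) (hcard : Fintype.card ι = Module.finrank 𝕜 E) :
    ∃ b : OrthonormalBasis ι 𝕜 E, ⇑b = v :=
  ⟨.mk hv (hv.linearIndependent.span_eq_top_of_card_eq_finrank' hcard).ge,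
    OrthonormalBasis.coe_mk _ _⟩

theorem orthonormal_pair {u w : E} (hu : ‖u‖ = 1) (hw : ‖w‖ = 1) (h : inner 𝕜 u w = 0) :
    Orthonormal 𝕜 ![u, w] := by
  simp [orthonormal_vecCons_iff, hu, hw, h]

end Orthonormal

section HessianTrace

variable {n : ℕ}

theorem deriv_deriv_comp_curve {φ : EuclideanSpace ℝ (Fin n) → ℝ}
    {γ γ' : ℝ → EuclideanSpace ℝ (Fin n)} {γ'' : EuclideanSpace ℝ (Fin n)} {t : ℝ}
    (hφ : ContDiff ℝ 2 φ) (hγ : ∀ t, HasDerivAt γ (γ' t) t) (hγ' : HasDerivAt γ' γ'' t) :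
    deriv (deriv (φ ∘ γ)) t = ⟪gradient φ (γ t), γ''⟫ + ⟪hess φ (γ t) (γ' t), γ' t⟫ := by
  rw [deriv_comp_curve (hφ.differentiable two_ne_zero) hγ]
  exact (((differentiable_gradient hφ (γ t)).hasFDerivAt.comp_hasDerivAt t (hγ t)).inner ℝ
    hγ').deriv

theorem trProj_orthonormalBasis {ι : Type*} [Fintype ι] [DecidableEq ι]
    (A : EuclideanSpace ℝ (Fin n) →L[ℝ] EuclideanSpace ℝ (Fin n))
    (b : OrthonormalBasis ι ℝ (EuclideanSpace ℝ (Fin n))) (i : ι) :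
    trProj A (b i) = ∑ j ∈ Finset.univ.erase i, ⟪A (b j), b j⟫ := by
  rw [Finset.sum_erase_eq_sub (Finset.mem_univ i), trProj, clmTrace,
    LinearMap.trace_eq_sum_inner _ b]
  simp only [ContinuousLinearMap.coe_coe, real_inner_comm]

end HessianTrace

section Plane

variable {τ ν g : EuclideanSpace ℝ (Fin 2)}

theorem trProj_eq_inner_of_orthonormal
    (A : EuclideanSpace ℝ (Fin 2) →L[ℝ] EuclideanSpace ℝ (Fin 2))
    (h : Orthonormal ℝ ![τ, ν]) : trProj A ν = ⟪A τ, τ⟫ := by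
  obtain ⟨b, hb⟩ := exists_orthonormalBasis_coe_eq h (by simp)
  have herase : (Finset.univ : Finset (Fin 2)).erase 1 = {0} := rfl
  simpa [hb, herase] using trProj_orthonormalBasis A b 1

theorem trProj_normalize_eq_inner
    (A : EuclideanSpace ℝ (Fin 2) →L[ℝ] EuclideanSpace ℝ (Fin 2))
    (hτ : ‖τ‖ = 1) (hg : g ≠ 0) (h : ⟪τ, g⟫ = 0) : trProj A (‖g‖⁻¹ • g) = ⟪A τ, τ⟫ :=
  trProj_eq_inner_of_orthonormal A <|
    orthonormal_pair hτ (norm_smul_inv_norm hg) (by rw [inner_smul_right, h, mul_zero])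

theorem eq_inner_smul_of_orthonormal (h : Orthonormal ℝ ![τ, ν]) (hg : ⟪τ, g⟫ = 0) :
    g = ⟪ν, g⟫ • ν := by
  obtain ⟨b, hb⟩ := exists_orthonormalBasis_coe_eq h (by simp)
  simpa [hb, hg] using (b.sum_repr' g).symm

theorem norm_eq_neg_inner_of_orthonormal {e : EuclideanSpace ℝ (Fin 2)}
    (h : Orthonormal ℝ ![τ, ν]) (hg : ⟪τ, g⟫ = 0) (he : 0 < ⟪ν, e⟫) (hge : ⟪g, e⟫ ≤ 0) :
    ‖g‖ = -⟪ν, g⟫ := by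
  have hgν := eq_inner_smul_of_orthonormal h hg
  have hν : ‖ν‖ = 1 := h.1 1
  have hsign : ⟪ν, g⟫ ≤ 0 := by
    rw [hgν, real_inner_smul_left] at hge
    exact nonpos_of_mul_nonpos_left hge he
  conv_lhs => rw [hgν, norm_smul, hν, mul_one, Real.norm_of_nonpos hsign]

end Plane

section UnitArc

/-- The unit vector `(cos t, sin t)`. Its derivative, the unit tangent to the circle, is
`unitVec (t + π / 2)`. -/
noncomputable def unitVec (t : ℝ) : EuclideanSpace ℝ (Fin 2) := !₂[Real.cos t, Real.sin t]

/-- The unit circle centred at `x - unitVec θ`, parametrized by angle, which passes through `x` at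
the parameter `θ` with outward normal `unitVec θ`. -/
noncomputable def unitArc (x : EuclideanSpace ℝ (Fin 2)) (θ t : ℝ) : EuclideanSpace ℝ (Fin 2) :=
  x + (unitVec t - unitVec θ)

theorem inner_unitVec (s t : ℝ) : ⟪unitVec s, unitVec t⟫ = Real.cos (s - t) := by
  simp [unitVec, PiLp.inner_apply, Fin.sum_univ_two, Real.cos_sub, mul_comm]

theorem norm_unitVec (t : ℝ) : ‖unitVec t‖ = 1 := by
  rw [norm_eq_sqrt_real_inner, inner_unitVec, sub_self, Real.cos_zero, Real.sqrt_one]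

theorem orthonormal_unitVec (t : ℝ) : Orthonormal ℝ ![unitVec (t + Real.pi / 2), unitVec t] :=
  orthonormal_pair (norm_unitVec _) (norm_unitVec _) <| by
    rw [inner_unitVec, add_sub_cancel_left, Real.cos_pi_div_two]

theorem unitVec_add_pi (t : ℝ) : unitVec (t + Real.pi) = -unitVec t := by
  ext i
  fin_cases i <;> simp [unitVec]

theorem hasDerivAt_unitVec (t : ℝ) : HasDerivAt unitVec (unitVec (t + Real.pi / 2)) t := by
  have h : HasDerivAt (fun s => ![Real.cos s, Real.sin s])
      ![Real.cos (t + Real.pi / 2), Real.sin (t + Real.pi / 2)] t := by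
    rw [Real.cos_add_pi_div_two, Real.sin_add_pi_div_two]
    exact hasDerivAt_pi.2 (Fin.forall_fin_two.2 ⟨Real.hasDerivAt_cos t, Real.hasDerivAt_sin t⟩)
  exact (PiLp.continuousLinearEquiv 2 ℝ fun _ : Fin 2 => ℝ).symm.hasFDerivAt.comp_hasDerivAt t h

theorem hasDerivAt_unitVec_add_pi_div_two (t : ℝ) :
    HasDerivAt (fun s => unitVec (s + Real.pi / 2)) (-unitVec t) t := by
  have h := (hasDerivAt_unitVec (t + Real.pi / 2)).comp_add_const t (Real.pi / 2)
  rwa [add_assoc, add_halves, unitVec_add_pi] at h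

variable {x : EuclideanSpace ℝ (Fin 2)} {θ : ℝ} {φ : EuclideanSpace ℝ (Fin 2) → ℝ}

theorem unitArc_self : unitArc x θ θ = x := by simp [unitArc]

theorem hasDerivAt_unitArc (t : ℝ) :
    HasDerivAt (unitArc x θ) (unitVec (t + Real.pi / 2)) t :=
  ((hasDerivAt_unitVec t).sub_const _).const_add x

theorem tendsto_unitArc_nhdsWithin {s : Set (EuclideanSpace ℝ (Fin 2))}
    (hs : ∀ᶠ t in 𝓝 θ, unitArc x θ t ∈ s) :
    Tendsto (unitArc x θ) (𝓝 θ) (𝓝[s] x) := by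
  have hcont := (hasDerivAt_unitArc (x := x) (θ := θ) θ).continuousAt.tendsto
  rw [unitArc_self] at hcont
  exact tendsto_nhdsWithin_iff.2 ⟨hcont, hs⟩

theorem isLocalMin_comp_unitArc {s : Set (EuclideanSpace ℝ (Fin 2))} (h : IsLocalMinOn φ s x)
    (hs : ∀ᶠ t in 𝓝 θ, unitArc x θ t ∈ s) : IsLocalMin (φ ∘ unitArc x θ) θ :=
  IsMinFilter.comp_tendsto (by rwa [unitArc_self]) (tendsto_unitArc_nhdsWithin hs)

theorem isLocalMax_comp_unitArc {s : Set (EuclideanSpace ℝ (Fin 2))} (h : IsLocalMaxOn φ s x)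
    (hs : ∀ᶠ t in 𝓝 θ, unitArc x θ t ∈ s) : IsLocalMax (φ ∘ unitArc x θ) θ :=
  IsMaxFilter.comp_tendsto (by rwa [unitArc_self]) (tendsto_unitArc_nhdsWithin hs)

theorem inner_tangent_gradient_of_isLocalExtr_comp_unitArc (hφ : Differentiable ℝ φ)
    (h : IsLocalExtr (φ ∘ unitArc x θ) θ) : ⟪unitVec (θ + Real.pi / 2), gradient φ x⟫ = 0 := by
  have hderiv := congrFun (deriv_comp_curve hφ (hasDerivAt_unitArc (x := x) (θ := θ))) θ
  rwa [h.deriv_eq_zero, unitArc_self, real_inner_comm, eq_comm] at hderiv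

theorem deriv_deriv_comp_unitArc (hφ : ContDiff ℝ 2 φ) :
    deriv (deriv (φ ∘ unitArc x θ)) θ =
      ⟪hess φ x (unitVec (θ + Real.pi / 2)), unitVec (θ + Real.pi / 2)⟫ -
        ⟪unitVec θ, gradient φ x⟫ := by
  rw [deriv_deriv_comp_curve hφ hasDerivAt_unitArc (hasDerivAt_unitVec_add_pi_div_two θ),
    unitArc_self, inner_neg_right, real_inner_comm, neg_add_eq_sub]

theorem continuousAt_comp_unitArc (hφ : Continuous φ) : ContinuousAt (φ ∘ unitArc x θ) θ :=
  hφ.continuousAt.comp (hasDerivAt_unitArc θ).continuousAt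

theorem inner_normal_gradient_le_of_isLocalMin_comp_unitArc (hφ : ContDiff ℝ 2 φ)
    (h : IsLocalMin (φ ∘ unitArc x θ) θ) :
    ⟪unitVec θ, gradient φ x⟫ ≤
      ⟪hess φ x (unitVec (θ + Real.pi / 2)), unitVec (θ + Real.pi / 2)⟫ := by
  have hsecond := deriv_deriv_nonneg_of_isLocalMin h (continuousAt_comp_unitArc hφ.continuous)
  rwa [deriv_deriv_comp_unitArc hφ, sub_nonneg] at hsecond

theorem le_inner_normal_gradient_of_isLocalMax_comp_unitArc (hφ : ContDiff ℝ 2 φ)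
    (h : IsLocalMax (φ ∘ unitArc x θ) θ) :
    ⟪hess φ x (unitVec (θ + Real.pi / 2)), unitVec (θ + Real.pi / 2)⟫ ≤
      ⟪unitVec θ, gradient φ x⟫ := by
  have hsecond := deriv_deriv_nonpos_of_isLocalMax h (continuousAt_comp_unitArc hφ.continuous)
  rwa [deriv_deriv_comp_unitArc hφ, sub_nonpos] at hsecond

end UnitArc

section ViscositySolutions

variable {O : Set (EuclideanSpace ℝ (Fin 2))} {v : EuclideanSpace ℝ (Fin 2) → ℝ}

theorem statSubsol_of_unitArc_subset_superlevel
    (h : ∀ x ∈ O, ∃ θ, ∀ᶠ t in 𝓝 θ, v x ≤ v (unitArc x θ t)) :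
    StatSubsol (fun _ => 0) O v := by
  intro φ hφ x hx hmax
  obtain ⟨θ, harc⟩ := h x hx
  have hmin : IsLocalMin (φ ∘ unitArc x θ) θ :=
    isLocalMin_comp_unitArc (isLocalMinOn_superlevel_of_isLocalMax_sub hmax) harc
  have htangent :=
    inner_tangent_gradient_of_isLocalExtr_comp_unitArc (hφ.differentiable two_ne_zero) (.inl hmin)
  have hcurv := inner_normal_gradient_le_of_isLocalMin_comp_unitArc hφ hmin
  refine ⟨fun hgrad => ?_, fun hgrad => ⟨unitVec θ, (norm_unitVec θ).le, ?_⟩⟩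
  · have hbound : -‖gradient φ x‖ ≤ ⟪unitVec θ, gradient φ x⟫ := by
      simpa [norm_unitVec] using
        neg_le_of_abs_le (abs_real_inner_le_norm (unitVec θ) (gradient φ x))
    rw [trProj_normalize_eq_inner _ (norm_unitVec _) hgrad htangent]
    linarith
  · rw [trProj_eq_inner_of_orthonormal _ (orthonormal_unitVec θ)]
    rw [hgrad, inner_zero_right] at hcurv
    linarith

theorem statSupersol_of_unitArc_subset_sublevel
    (h : ∀ x ∈ O, ∃ θ, (∀ᶠ t in 𝓝 θ, v (unitArc x θ t) ≤ v x) ∧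
      ∃ e, 0 < ⟪unitVec θ, e⟫ ∧ ∃ᶠ s : ℝ in 𝓝[>] 0, v (x + s • e) ≤ v x) :
    StatSupersol (fun _ => 0) O v := by
  intro φ hφ x hx hmin
  obtain ⟨θ, harc, e, he, hray⟩ := h x hx
  have hsublevel := isLocalMaxOn_sublevel_of_isLocalMin_sub hmin
  have hmax : IsLocalMax (φ ∘ unitArc x θ) θ := isLocalMax_comp_unitArc hsublevel harc
  have htangent :=
    inner_tangent_gradient_of_isLocalExtr_comp_unitArc (hφ.differentiable two_ne_zero) (.inr hmax)
  have hcurv := le_inner_normal_gradient_of_isLocalMax_comp_unitArc hφ hmax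
  refine ⟨fun hgrad => ?_, fun hgrad => ⟨unitVec θ, (norm_unitVec θ).le, ?_⟩⟩
  · have hdescent : ⟪gradient φ x, e⟫ ≤ 0 := by
      rw [inner_gradient_left]
      exact hsublevel.hasFDerivWithinAt_nonpos
        (hφ.differentiable two_ne_zero x).hasFDerivAt.hasFDerivWithinAt
        (mem_posTangentConeAt_of_frequently_mem hray)
    rw [trProj_normalize_eq_inner _ (norm_unitVec _) hgrad htangent,
      norm_eq_neg_inner_of_orthonormal (orthonormal_unitVec θ) htangent he hdescent]
    linarith
  · rw [trProj_eq_inner_of_orthonormal _ (orthonormal_unitVec θ)]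
    rw [hgrad, inner_zero_right] at hcurv
    linarith

end ViscositySolutions

section Profile

variable {x : EuclideanSpace ℝ (Fin 2)}

theorem continuous_vStadium : Continuous vStadium := by
  unfold vStadium
  fun_prop

theorem le_sqrt_one_sub_sq_iff : x 0 ≤ √(1 - x 1 ^ 2) ↔ x 0 ≤ 0 ∨ ‖x‖ ≤ 1 := by
  rcases le_or_gt (x 0) 0 with hx | hx
  · exact iff_of_true (hx.trans (Real.sqrt_nonneg _)) (.inl hx)
  · rw [Real.le_sqrt' hx, or_iff_right hx.not_ge, ← sq_le_one_iff₀ (norm_nonneg x),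
      EuclideanSpace.real_norm_sq_eq, Fin.sum_univ_two, le_sub_iff_add_le]

theorem vStadium_eq_zero (h : x 0 ≤ 0 ∨ ‖x‖ ≤ 1) : vStadium x = 0 :=
  min_eq_left (sub_nonneg.2 (le_sqrt_one_sub_sq_iff.2 h))

theorem vStadium_eq_sqrt_sub (h : ¬(x 0 ≤ 0 ∨ ‖x‖ ≤ 1)) :
    vStadium x = √(1 - x 1 ^ 2) - x 0 :=
  min_eq_right (sub_nonpos.2 (not_le.1 (mt le_sqrt_one_sub_sq_iff.1 h)).le)

theorem vStadium_add_smul_le {s : ℝ} (hs : 0 ≤ s) : vStadium (x + s • unitVec 0) ≤ vStadium x := by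
  have hs' : √(1 - x 1 ^ 2) - (x 0 + s) ≤ √(1 - x 1 ^ 2) - x 0 := by linarith
  simpa [vStadium, unitVec] using min_le_min_left 0 hs'

theorem vStadium_unitArc {θ t : ℝ} (hx : Real.sin θ = x 1) (hθ : 0 ≤ Real.cos θ)
    (ht : 0 ≤ Real.cos t) : vStadium (unitArc x θ t) = vStadium x := by
  have hsqrt {s : ℝ} (hs : 0 ≤ Real.cos s) : √(1 - Real.sin s ^ 2) = Real.cos s := by
    rw [← Real.abs_cos_eq_sqrt_one_sub_sin_sq, abs_of_nonneg hs]
  have harc₀ : unitArc x θ t 0 = x 0 + (Real.cos t - Real.cos θ) := by simp [unitArc, unitVec]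
  have harc₁ : unitArc x θ t 1 = Real.sin t := by simp [unitArc, unitVec, hx]
  rw [vStadium, vStadium, harc₀, harc₁, ← hx, hsqrt ht, hsqrt hθ]
  ring_nf

theorem exists_eventually_vStadium_unitArc_eq (hx : |x 1| < 1) :
    ∃ θ, 0 < Real.cos θ ∧ ∀ᶠ t in 𝓝 θ, vStadium (unitArc x θ t) = vStadium x := by
  obtain ⟨hlower, hupper⟩ := abs_lt.1 hx
  have hcos : 0 < Real.cos (Real.arcsin (x 1)) :=
    Real.cos_pos_of_mem_Ioo ⟨Real.neg_pi_div_two_lt_arcsin.2 hlower,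
      Real.arcsin_lt_pi_div_two.2 hupper⟩
  refine ⟨Real.arcsin (x 1), hcos, ?_⟩
  filter_upwards [Real.continuous_cos.continuousAt.eventually (lt_mem_nhds hcos)] with t ht
  exact vStadium_unitArc (Real.sin_arcsin hlower.le hupper.le) hcos.le ht.le

variable {O : Set (EuclideanSpace ℝ (Fin 2))}

theorem statSubsol_comp_vStadium (hO : ∀ x ∈ O, |x 1| < 1) (G : ℝ → ℝ) :
    StatSubsol (fun _ => 0) O (fun x => G (vStadium x)) := by
  refine statSubsol_of_unitArc_subset_superlevel fun x hx => ?_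
  obtain ⟨θ, -, harc⟩ := exists_eventually_vStadium_unitArc_eq (hO x hx)
  exact ⟨θ, harc.mono fun t ht => (congrArg G ht).ge⟩

theorem statSupersol_comp_vStadium (hO : ∀ x ∈ O, |x 1| < 1) {G : ℝ → ℝ} (hG : Monotone G) :
    StatSupersol (fun _ => 0) O (fun x => G (vStadium x)) := by
  refine statSupersol_of_unitArc_subset_sublevel fun x hx => ?_
  obtain ⟨θ, hθ, harc⟩ := exists_eventually_vStadium_unitArc_eq (hO x hx)
  refine ⟨θ, harc.mono fun t ht => (congrArg G ht).le, unitVec 0, ?_, ?_⟩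
  · rwa [inner_unitVec, sub_zero]
  · have hray : ∀ᶠ s : ℝ in 𝓝[>] 0, G (vStadium (x + s • unitVec 0)) ≤ G (vStadium x) := by
      filter_upwards [self_mem_nhdsWithin] with s hs
      exact hG (vStadium_add_smul_le (le_of_lt hs))
    exact hray.frequently

end Profile

section Stadium

variable {a : ℝ}

theorem abs_apply_one_le_of_mem_stadium {x : EuclideanSpace ℝ (Fin 2)} (hx : x ∈ stadium a) :
    |x 1| ≤ 1 := by
  obtain ⟨s, -, hxs⟩ := mem_iUnion₂.1 hx
  have hcoord := (PiLp.norm_apply_le (x - pt s) 1).trans (mem_closedBall_iff_norm.1 hxs)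
  simpa [pt] using hcoord

theorem abs_apply_one_lt_of_mem_interior_stadium {x : EuclideanSpace ℝ (Fin 2)}
    (hx : x ∈ interior (stadium a)) : |x 1| < 1 := by
  let coord : EuclideanSpace ℝ (Fin 2) →L[ℝ] ℝ := EuclideanSpace.proj 1
  have hopen : IsOpenMap coord := coord.isOpenMap fun r => ⟨!₂[0, r], by simp [coord]⟩
  have hmem : x ∈ interior (coord ⁻¹' Icc (-1) 1) :=
    interior_mono (fun y hy => abs_le.1 (abs_apply_one_le_of_mem_stadium hy)) hx
  rw [← hopen.preimage_interior_eq_interior_preimage coord.continuous, interior_Icc] at hmem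
  exact abs_lt.2 hmem

theorem ball_subset_interior_stadium {s : ℝ} (hs : s ∈ Icc (-a) a) :
    Metric.ball (pt s) 1 ⊆ interior (stadium a) :=
  interior_maximal (Metric.ball_subset_closedBall.trans
    (subset_biUnion_of_mem (u := fun s => Metric.closedBall (pt s) 1) hs)) Metric.isOpen_ball

theorem dist_pt (s t : ℝ) : dist (pt s) (pt t) = |s - t| := by
  simp [pt, EuclideanSpace.dist_eq, Real.dist_eq, Real.sqrt_sq_eq_abs]

theorem pt_mem_interior_stadium {s : ℝ} (hs : |s| < a + 1) (ha : 0 ≤ a) :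
    pt s ∈ interior (stadium a) := by
  obtain ⟨hlower, hupper⟩ := abs_lt.1 hs
  refine ball_subset_interior_stadium (s := max (-a) (min s a)) ⟨le_max_left _ _, ?_⟩ ?_
  · exact max_le (by linarith) (min_le_right _ _)
  · rw [Metric.mem_ball, dist_pt, abs_lt]
    grind

theorem vStadium_pt (s : ℝ) : vStadium (pt s) = min 0 (1 - s) := by
  simp [vStadium, pt]

theorem exists_mem_interior_stadium_vStadium_ne_zero (ha : 0 < a) :
    ∃ x ∈ interior (stadium a), vStadium x ≠ 0 := by
  refine ⟨pt (1 + a / 2), pt_mem_interior_stadium ?_ ha.le, ?_⟩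
  · rw [abs_of_pos (by positivity)]
    linarith
  · rw [vStadium_pt, min_eq_right (by linarith)]
    linarith

end Stadium

/-- On the stadium `U`, the function `v = min(0, √(1-x₂²) - x₁)`
(equal to `0` when `x₁ ≤ 0` or `|x| ≤ 1`, and to `√(1-x₂²) - x₁` otherwise) is
continuous, vanishes on `B(0,1)`, is not identically `0` on `U°`, and is a viscosity
solution of `-(div(Dv/|Dv|)+1)|Dv| = 0` in `U°`; moreover every `λ·v` with `λ > 0` is
also such a solution, and these are pairwise distinct on `U°`, so the equation has
infinitely many distinct continuous solutions vanishing on `B(0,1)` but not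
identically zero. -/
theorem stmt_16 (a : ℝ) (ha : 0 < a) :
    ContinuousOn vStadium (stadium a) ∧
    (∀ x ∈ Metric.ball (0 : EuclideanSpace ℝ (Fin 2)) 1, vStadium x = 0) ∧
    (∀ x ∈ stadium a,
      ((x 0 ≤ 0 ∨ ‖x‖ ≤ 1) → vStadium x = 0) ∧
      (¬(x 0 ≤ 0 ∨ ‖x‖ ≤ 1) → vStadium x = Real.sqrt (1 - (x 1) ^ 2) - x 0)) ∧
    (∃ x ∈ interior (stadium a), vStadium x ≠ 0) ∧
    StatSubsol (fun _ => 0) (interior (stadium a)) vStadium ∧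
    StatSupersol (fun _ => 0) (interior (stadium a)) vStadium ∧
    (∀ l : ℝ, 0 < l →
      StatSubsol (fun _ => 0) (interior (stadium a)) (fun x => l * vStadium x) ∧
      StatSupersol (fun _ => 0) (interior (stadium a)) (fun x => l * vStadium x)) ∧
    (∀ l m : ℝ, 0 < l → 0 < m → l ≠ m →
      ∃ x ∈ interior (stadium a), l * vStadium x ≠ m * vStadium x) := by
  have hstrip : ∀ x ∈ interior (stadium a), |x 1| < 1 :=
    fun _ => abs_apply_one_lt_of_mem_interior_stadium
  obtain ⟨p, hp, hvp⟩ := exists_mem_interior_stadium_vStadium_ne_zero ha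
  refine ⟨continuous_vStadium.continuousOn,
    fun x hx => vStadium_eq_zero (.inr (mem_ball_zero_iff.1 hx).le),
    fun x _ => ⟨vStadium_eq_zero, vStadium_eq_sqrt_sub⟩, ⟨p, hp, hvp⟩,
    statSubsol_comp_vStadium hstrip id, statSupersol_comp_vStadium hstrip monotone_id,
    fun l hl => ⟨statSubsol_comp_vStadium hstrip (l * ·),
      statSupersol_comp_vStadium hstrip (monotone_mul_left_of_nonneg hl.le)⟩,
    fun l m _ _ hlm => ⟨p, hp, fun h => hlm (mul_right_cancel₀ hvp h)⟩⟩
end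

section
/- Let a < b be reals and let g : (a,b) → ℝ be differentiable. Suppose the function s(x) := g'(x)/√(1 + g'(x)²) is differentiable on (a,b) with s'(x) = -1 for every x ∈ (a,b) (i.e., g solves the graph equation -(d/dx)(g'/√(1+g'²)) = 1 of curvature one). Then the graph of g lies on a unit circle: there exist p, q ∈ ℝ such that (x - p)² + (g(x) - q)² = 1 for all x ∈ (a,b). -/
open Set

/-! The tangent angle `θ = arctan g'` satisfies `sin θ = g' / √(1 + g' ^ 2)`, so the graph equation
says `(sin θ)' = κ` (with `κ = -1`), and then `(cos θ)' = -κ g'`. Hence the centre of curvature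
`(x - sin θ / κ, g + cos θ / κ)` does not move, and the graph stays at distance `1 / |κ|` from
it. -/

lemma sin_arctan_eq_mul_cos_arctan (t : ℝ) :
    Real.sin (Real.arctan t) = t * Real.cos (Real.arctan t) := by
  rw [← Real.tan_mul_cos (Real.cos_arctan_pos t).ne', Real.tan_arctan]

lemma cos_arctan_eq_sqrt_one_sub_sin_arctan_sq (t : ℝ) :
    Real.cos (Real.arctan t) = √(1 - Real.sin (Real.arctan t) ^ 2) :=
  Real.cos_eq_sqrt_one_sub_sin_sq (Real.neg_pi_div_two_lt_arctan t).le
    (Real.arctan_lt_pi_div_two t).le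

lemma hasDerivAt_cos_arctan_of_hasDerivAt_sin_arctan {m : ℝ → ℝ} {k x : ℝ}
    (h : HasDerivAt (fun y => Real.sin (Real.arctan (m y))) k x) :
    HasDerivAt (fun y => Real.cos (Real.arctan (m y))) (-(k * m x)) x := by
  have cos_ne_zero : Real.cos (Real.arctan (m x)) ≠ 0 := (Real.cos_arctan_pos (m x)).ne'
  have one_sub_ne_zero : 1 - Real.sin (Real.arctan (m x)) ^ 2 ≠ 0 := by
    rw [← Real.cos_sq']
    exact pow_ne_zero 2 cos_ne_zero
  have hasDerivAt_sqrt := ((h.fun_pow 2).const_sub 1).sqrt one_sub_ne_zero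
  simp only [← cos_arctan_eq_sqrt_one_sub_sin_arctan_sq, Nat.cast_ofNat, Nat.add_one_sub_one,
    pow_one] at hasDerivAt_sqrt
  convert hasDerivAt_sqrt using 1
  rw [sin_arctan_eq_mul_cos_arctan]
  field_simp

lemma exists_forall_eq_of_hasDerivAt_zero {𝕜 E : Type*} [RCLike 𝕜] [NormedAddCommGroup E]
    [NormedSpace 𝕜 E] {U : Set 𝕜} (hU : IsOpen U) (hU' : IsPreconnected U) {f : 𝕜 → E}
    (hf : ∀ x ∈ U, HasDerivAt f 0 x) : ∃ c, ∀ x ∈ U, f x = c :=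
  hU.exists_is_const_of_deriv_eq_zero hU'
    (fun x hx => (hf x hx).differentiableAt.differentiableWithinAt) fun x hx => (hf x hx).deriv

theorem stmt_17_general {U : Set ℝ} (hU : IsOpen U) (hU' : IsPreconnected U) {κ : ℝ} (hκ : κ ≠ 0)
    {g g' : ℝ → ℝ} (hg : ∀ x ∈ U, HasDerivAt g (g' x) x)
    (hs : ∀ x ∈ U, HasDerivAt (fun y => g' y / √(1 + g' y ^ 2)) κ x) :
    ∃ p q : ℝ, ∀ x ∈ U, (x - p) ^ 2 + (g x - q) ^ 2 = (1 / κ) ^ 2 := by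
  simp only [← Real.sin_arctan] at hs
  obtain ⟨p, hp⟩ : ∃ p, ∀ x ∈ U, x - Real.sin (Real.arctan (g' x)) / κ = p :=
    exists_forall_eq_of_hasDerivAt_zero hU hU' fun x hx => by
      simpa [hκ] using (hasDerivAt_id' x).fun_sub ((hs x hx).div_const κ)
  obtain ⟨q, hq⟩ : ∃ q, ∀ x ∈ U, g x + Real.cos (Real.arctan (g' x)) / κ = q :=
    exists_forall_eq_of_hasDerivAt_zero hU hU' fun x hx => by
      simpa [neg_div, hκ] using
        (hg x hx).fun_add ((hasDerivAt_cos_arctan_of_hasDerivAt_sin_arctan (hs x hx)).div_const κ)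
  refine ⟨p, q, fun x hx => ?_⟩
  calc (x - p) ^ 2 + (g x - q) ^ 2
      = (Real.sin (Real.arctan (g' x)) ^ 2 + Real.cos (Real.arctan (g' x)) ^ 2) / κ ^ 2 := by
        rw [← hp x hx, ← hq x hx]
        ring
    _ = (1 / κ) ^ 2 := by rw [Real.sin_sq_add_cos_sq, one_div_pow]

/-- If `g : (a,b) → ℝ` is differentiable and
`s(x) = g'(x)/√(1+g'(x)²)` is differentiable with `s' ≡ -1` on `(a,b)` (the graph
equation of curvature one), then the graph of `g` lies on a unit circle: there are
`p, q` with `(x-p)² + (g(x)-q)² = 1` on `(a,b)`. -/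
theorem stmt_17 (a b : ℝ) (hab : a < b) (g g' : ℝ → ℝ)
    (hg : ∀ x ∈ Set.Ioo a b, HasDerivAt g (g' x) x)
    (hs : ∀ x ∈ Set.Ioo a b,
      HasDerivAt (fun y => g' y / Real.sqrt (1 + (g' y) ^ 2)) (-1) x) :
    ∃ p q : ℝ, ∀ x ∈ Set.Ioo a b, (x - p) ^ 2 + (g x - q) ^ 2 = 1 := by
  simpa using stmt_17_general isOpen_Ioo isPreconnected_Ioo (by norm_num) hg hs
end

section
/- Let U ⊆ ℝ² be open and convex, and let D ⊆ U be an open set which is a stationary set-theoretic supersolution of -κ - 1 ≥ 0 on ∂D ∩ U, i.e., the function (x,t) ↦ 𝟙_D(x) is a viscosity supersolution of u_t - (div(Du/|Du|)+1)|Du| = 0 in U × (0,∞). Then every connected component of D is convex. -/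
open Set Filter Topology
open scoped RealInnerProductSpace

/-!
Let `T` be a triangle two of whose sides lie in `D`, and suppose `T ⊄ D`. Among the points of the
compact set `T \ D` take one, `x₀`, farthest from the third side. Near `x₀`, the open half-plane on
the far side of the line through `x₀` parallel to the third side is contained in `D`. Hence large
multiples of a linear function touch `𝟙_D` from below at `x₀`: they have no curvature, but their
forcing term `-‖Dφ‖` is as negative as we please, which contradicts the supersolution property.
So lying on a common segment in `D` is a transitive relation, and by openness of `D` it holds
throughout each connected component.
-/

section HalfSpace

variable {E : Type*} [AddCommGroup E] [Module ℝ E] [TopologicalSpace E]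

/-- `D` contains, near `x`, an open half-space whose boundary hyperplane passes through `x`. For
`x ∉ D` this says that a hyperplane touches the complement of `D` at `x`, which the viscosity
inequality forbids. -/
def ContainsHalfSpaceNear (D : Set E) (x : E) : Prop :=
  ∃ L : E →L[ℝ] ℝ, L ≠ 0 ∧ ∀ᶠ y in 𝓝 x, L x < L y → y ∈ D

theorem isLocalMin_indicator_sub_clm {T : Type*} [TopologicalSpace T] {D : Set E} {x₀ : E} {t₀ : T}
    {L : E →L[ℝ] ℝ} (hx₀ : x₀ ∉ D) (hL : ∀ᶠ y in 𝓝 x₀, L x₀ < L y → y ∈ D) :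
    IsLocalMin (fun p : E × T => D.indicator (fun _ => (1 : ℝ)) p.1 - L p.1) (x₀, t₀) := by
  have hsmall : ∀ᶠ y in 𝓝 x₀, L y < L x₀ + 1 :=
    L.continuous.continuousAt.eventually_lt_const (lt_add_one _)
  filter_upwards [continuousAt_fst.eventually (hL.and hsmall)] with ⟨y, t⟩ ⟨hyD, hy⟩
  by_cases hmem : y ∈ D
  · simp only [indicator_of_notMem hx₀, indicator_of_mem hmem]
    linarith
  · have : L y ≤ L x₀ := not_lt.1 fun hlt => hmem (hyD hlt)
    simp only [indicator_of_notMem hx₀, indicator_of_notMem hmem]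
    linarith

end HalfSpace

section Viscosity

variable {n : ℕ} {f : EuclideanSpace ℝ (Fin n) → ℝ} {U : Set (EuclideanSpace ℝ (Fin n))}

theorem sGrad_clm (L : EuclideanSpace ℝ (Fin n) →L[ℝ] ℝ) (x : EuclideanSpace ℝ (Fin n)) (t : ℝ) :
    sGrad (fun y _ => L y) x t = (InnerProductSpace.toDual ℝ _).symm L := by
  rw [sGrad, gradient, L.fderiv]

theorem sHess_clm (L : EuclideanSpace ℝ (Fin n) →L[ℝ] ℝ) (x : EuclideanSpace ℝ (Fin n)) (t : ℝ) :
    sHess (fun y _ => L y) x t = 0 := by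
  simp only [sHess, gradient, L.fderiv, fderiv_fun_const, Pi.zero_apply]

theorem ParabSupersol.le_neg_norm_of_isLocalMin_sub_clm {u : EuclideanSpace ℝ (Fin n) → ℝ → ℝ}
    (hu : ParabSupersol f U u) {x₀ : EuclideanSpace ℝ (Fin n)} (hx₀ : x₀ ∈ U) {t₀ : ℝ}
    (ht₀ : 0 < t₀) {L : EuclideanSpace ℝ (Fin n) →L[ℝ] ℝ} (hL : L ≠ 0)
    (hmin : IsLocalMin (fun p : EuclideanSpace ℝ (Fin n) × ℝ => u p.1 p.2 - L p.1) (x₀, t₀)) :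
    f x₀ ≤ -‖L‖ := by
  have hgrad : sGrad (fun y _ => L y) x₀ t₀ ≠ 0 := by
    rwa [sGrad_clm, ne_eq, LinearIsometryEquiv.map_eq_zero_iff]
  have hvisc := (hu (fun y _ => L y) (L.contDiff.comp contDiff_fst) x₀ hx₀ t₀ ht₀ hmin).1 hgrad
  simpa only [tDeriv, deriv_const, sHess_clm, sGrad_clm, trProj, clmTrace,
    ContinuousLinearMap.toLinearMap_zero, map_zero, zero_apply,
    inner_zero_left, sub_zero, zero_add, zero_sub, LinearIsometryEquiv.norm_map] using hvisc

theorem ParabSupersol.not_containsHalfSpaceNear {D : Set (EuclideanSpace ℝ (Fin n))}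
    (hD : ParabSupersol f U (fun x _ => D.indicator (fun _ => (1 : ℝ)) x))
    {x₀ : EuclideanSpace ℝ (Fin n)} (hx₀U : x₀ ∈ U) (hx₀D : x₀ ∉ D) :
    ¬ContainsHalfSpaceNear D x₀ := by
  rintro ⟨L, hL, hLD⟩
  obtain ⟨c, hc, hcL⟩ := exists_pos_lt_mul (norm_pos_iff.2 hL) (-f x₀)
  have hcLD : ∀ᶠ y in 𝓝 x₀, (c • L) x₀ < (c • L) y → y ∈ D :=
    hLD.mono fun y hy hlt => hy (lt_of_mul_lt_mul_left hlt hc.le)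
  have hle : f x₀ ≤ -‖c • L‖ := hD.le_neg_norm_of_isLocalMin_sub_clm hx₀U one_pos
    (smul_ne_zero hc.ne' hL) (isLocalMin_indicator_sub_clm hx₀D hcLD)
  rw [norm_smul, Real.norm_of_nonneg hc.le] at hle
  linarith

end Viscosity

section Simplex

theorem mem_convexHull_image_compl_singleton_of_coord_eq_zero {ι R E : Type*} [Finite ι] [Field R]
    [LinearOrder R] [IsStrictOrderedRing R] [AddCommGroup E] [Module R E] (b : AffineBasis ι R E)
    {j : ι} {x : E} (hx : x ∈ convexHull R (range b)) (hj : b.coord j x = 0) :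
    x ∈ convexHull R (b '' {j}ᶜ) := by
  classical
  have := Fintype.ofFinite ι
  rw [b.convexHull_eq_nonneg_coord] at hx
  have hsum : ∑ i ∈ Finset.univ.erase j, b.coord i x = 1 := by
    rw [Finset.sum_erase Finset.univ (f := fun i => b.coord i x) hj, b.sum_coord_apply_eq_one]
  rw [← b.linear_combination_coord_eq_self x,
    ← Finset.sum_erase Finset.univ (f := fun i => b.coord i x • b i) (by rw [hj, zero_smul])]
  exact (convex_convexHull R _).sum_mem (fun i _ => hx i) hsum fun i hi =>
    subset_convexHull R _ (mem_image_of_mem b (Finset.ne_of_mem_erase hi))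

variable {ι E : Type*} [Finite ι] [NormedAddCommGroup E] [NormedSpace ℝ E] {D : Set E}

theorem containsHalfSpaceNear_of_isMaxOn_coord [Nontrivial ι] (b : AffineBasis ι ℝ E) (i : ι)
    {x : E} (hx : x ∈ convexHull ℝ (range b)) (hpos : ∀ j ≠ i, 0 < b.coord j x)
    (hmax : IsMaxOn (b.coord i) (convexHull ℝ (range b) \ D) x) : ContainsHalfSpaceNear D x := by
  have := b.finiteDimensional
  have hcoord_sub (y : E) : b.coord i y - b.coord i x = (b.coord i).linear (y - x) :=
    ((b.coord i).linearMap_vsub y x).symm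
  refine ⟨(b.coord i).linear.toContinuousLinearMap, fun h => ?_, ?_⟩
  · obtain ⟨y, hy⟩ := b.surjective_coord i (b.coord i x + 1)
    have hlin : (b.coord i).linear (y - x) = 0 := DFunLike.congr_fun h (y - x)
    linarith [hcoord_sub y]
  · have hpos_near : ∀ᶠ y in 𝓝 x, ∀ j ≠ i, 0 < b.coord j y :=
      eventually_all.2 fun j => eventually_imp_distrib_left.2 fun hj =>
        (continuous_barycentric_coord b j).continuousAt.eventually_const_lt (hpos j hj)
    filter_upwards [hpos_near] with y hy hxy
    have hlt : b.coord i x < b.coord i y := by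
      rw [← sub_pos, hcoord_sub, map_sub]
      exact sub_pos.2 hxy
    rw [b.convexHull_eq_nonneg_coord] at hx hmax
    have hyT : ∀ j, 0 ≤ b.coord j y := fun j => by
      rcases eq_or_ne j i with rfl | hj
      · exact (hx j).trans hlt.le
      · exact (hy j hj).le
    by_contra hyD
    exact hlt.not_ge (hmax ⟨hyT, hyD⟩)

theorem convexHull_range_subset_of_facets_subset [Nontrivial ι] (b : AffineBasis ι ℝ E) (i : ι)
    (hD : IsOpen D) (hfacet : ∀ j ≠ i, convexHull ℝ (b '' {j}ᶜ) ⊆ D)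
    (hnear : ∀ x ∈ convexHull ℝ (range b), x ∉ D → ¬ContainsHalfSpaceNear D x) :
    convexHull ℝ (range b) ⊆ D := by
  have := b.finiteDimensional
  rw [← sdiff_eq_empty]
  by_contra hne
  have hcompact : IsCompact (convexHull ℝ (range b) \ D) :=
    ((finite_range b).isCompact_convexHull ℝ).diff hD
  obtain ⟨x, ⟨hxT, hxD⟩, hmax⟩ := hcompact.exists_isMaxOn (nonempty_iff_ne_empty.2 hne)
    (continuous_barycentric_coord b i).continuousOn
  have hpos : ∀ j ≠ i, 0 < b.coord j x := fun j hj => by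
    have hnonneg : 0 ≤ b.coord j x := (b.convexHull_eq_nonneg_coord ▸ hxT) j
    exact hnonneg.lt_of_ne' fun h0 =>
      hxD (hfacet j hj (mem_convexHull_image_compl_singleton_of_coord_eq_zero b hxT h0))
  exact hnear x hxT hxD (containsHalfSpaceNear_of_isMaxOn_coord b i hxT hpos hmax)

theorem convexHull_range_subset_of_two_sides_subset (b : AffineBasis (Fin 3) ℝ E) (hD : IsOpen D)
    (h₀₁ : segment ℝ (b 0) (b 1) ⊆ D) (h₁₂ : segment ℝ (b 1) (b 2) ⊆ D)
    (hnear : ∀ x ∈ convexHull ℝ (range b), x ∉ D → ¬ContainsHalfSpaceNear D x) :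
    convexHull ℝ (range b) ⊆ D := by
  refine convexHull_range_subset_of_facets_subset b 1 hD (fun j hj => ?_) hnear
  obtain rfl | rfl : j = 0 ∨ j = 2 := by omega
  · have hcompl : ({0}ᶜ : Set (Fin 3)) = {1, 2} := by ext k; fin_cases k <;> simp
    rwa [hcompl, image_pair, convexHull_pair]
  · have hcompl : ({2}ᶜ : Set (Fin 3)) = {0, 1} := by ext k; fin_cases k <;> simp
    rwa [hcompl, image_pair, convexHull_pair]

end Simplex

section Segment

theorem segment_subset_union_of_collinear {R E : Type*} [Field R] [LinearOrder R]
    [IsStrictOrderedRing R] [AddCommGroup E] [Module R E] {x y z : E}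
    (h : Collinear R {x, y, z}) : segment R x z ⊆ segment R x y ∪ segment R y z := by
  obtain ⟨o, v, hline⟩ := (collinear_iff_exists_forall_eq_smul_vadd _).1 h
  obtain ⟨r, rfl⟩ := hline x (by simp)
  obtain ⟨s, rfl⟩ := hline y (by simp)
  obtain ⟨t, rfl⟩ := hline z (by simp)
  have himage (a c : R) :
      segment R (a • v +ᵥ o) (c • v +ᵥ o) = AffineMap.lineMap o (v +ᵥ o) '' uIcc a c := by
    rw [← segment_eq_uIcc, image_segment]
    simp [AffineMap.lineMap_apply]
  simp only [himage, ← image_union]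
  exact image_mono uIcc_subset_uIcc_union_uIcc

theorem segment_subset_of_finrank_le_two {E : Type*} [NormedAddCommGroup E] [NormedSpace ℝ E]
    [FiniteDimensional ℝ E] (hE : Module.finrank ℝ E ≤ 2) {D : Set E} (hD : IsOpen D)
    (hnear : ∀ x ∈ convexHull ℝ D, x ∉ D → ¬ContainsHalfSpaceNear D x) {x y z : E}
    (hxy : segment ℝ x y ⊆ D) (hyz : segment ℝ y z ⊆ D) : segment ℝ x z ⊆ D := by
  by_cases hcol : Collinear ℝ {x, y, z}
  · exact (segment_subset_union_of_collinear hcol).trans (union_subset hxy hyz)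
  have hindep : AffineIndependent ℝ ![x, y, z] := affineIndependent_iff_not_collinear_set.2 hcol
  have hspan : affineSpan ℝ (range ![x, y, z]) = ⊤ := by
    rw [hindep.affineSpan_eq_top_iff_card_eq_finrank_add_one]
    have hcard := hindep.card_le_finrank_succ.trans (Nat.succ_le_succ (Submodule.finrank_le _))
    rw [Fintype.card_fin] at hcard ⊢
    omega
  let b : AffineBasis (Fin 3) ℝ E := ⟨![x, y, z], hindep, hspan⟩
  have hvertices : range b ⊆ D := by
    rintro _ ⟨i, rfl⟩
    fin_cases i
    exacts [hxy (left_mem_segment ℝ x y), hyz (left_mem_segment ℝ y z),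
      hyz (right_mem_segment ℝ y z)]
  have htriangle : convexHull ℝ (range b) ⊆ D :=
    convexHull_range_subset_of_two_sides_subset b hD hxy hyz fun p hp =>
      hnear p (convexHull_mono hvertices hp)
  exact (segment_subset_convexHull (mem_range_self (f := b) 0) (mem_range_self 2)).trans htriangle

theorem convex_connectedComponentIn_of_segment_subset_trans {E : Type*} [AddCommGroup E]
    [Module ℝ E] [TopologicalSpace E] [IsTopologicalAddGroup E] [ContinuousSMul ℝ E]
    [LocallyConvexSpace ℝ E] {D : Set E} (hD : IsOpen D)
    (htrans : ∀ x y z, segment ℝ x y ⊆ D → segment ℝ y z ⊆ D → segment ℝ x z ⊆ D) (x : E) :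
    Convex ℝ (connectedComponentIn D x) := by
  refine convex_iff_segment_subset.2 fun y hy z hz => ?_
  have hlocal : ∀ p ∈ connectedComponentIn D x,
      ∀ᶠ q in 𝓝[connectedComponentIn D x] p, segment ℝ p q ⊆ D := fun p hp => by
    obtain ⟨s, ⟨hs, hsconv⟩, hsD⟩ := (LocallyConvexSpace.convex_basis (𝕜 := ℝ) p).mem_iff.1
      (hD.mem_nhds (connectedComponentIn_subset D x hp))
    filter_upwards [mem_nhdsWithin_of_mem_nhds hs] with q hq
    exact (hsconv.segment_subset (mem_of_mem_nhds hs) hq).trans hsD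
  have hyz : segment ℝ y z ⊆ D :=
    isPreconnected_connectedComponentIn.induction₂ (fun p q => segment ℝ p q ⊆ D) hlocal
      (fun p q r _ _ _ => htrans p q r) (fun p q _ _ => (segment_symm ℝ p q ▸ ·)) hy hz
  rw [connectedComponentIn_eq hy]
  exact (convex_segment y z).isPreconnected.subset_connectedComponentIn
    (left_mem_segment ℝ y z) hyz

end Segment

theorem stmt_18_general {n : ℕ} (hn : n ≤ 2) {f : EuclideanSpace ℝ (Fin n) → ℝ}
    {U D : Set (EuclideanSpace ℝ (Fin n))} (hU : Convex ℝ U) (hD : IsOpen D) (hDU : D ⊆ U)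
    (hsuper : ParabSupersol f U (fun x _ => D.indicator (fun _ => (1 : ℝ)) x)) :
    ∀ x ∈ D, Convex ℝ (connectedComponentIn D x) := by
  intro x _
  have hnear : ∀ y ∈ convexHull ℝ D, y ∉ D → ¬ContainsHalfSpaceNear D y := fun y hy =>
    hsuper.not_containsHalfSpaceNear (convexHull_min hDU hU hy)
  have hdim : Module.finrank ℝ (EuclideanSpace ℝ (Fin n)) ≤ 2 := by
    rwa [finrank_euclideanSpace_fin]
  exact convex_connectedComponentIn_of_segment_subset_trans hD
    (fun _ _ _ => segment_subset_of_finrank_le_two hdim hD hnear) x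

/-- Let `U ⊆ ℝ²` be open and convex and let `D ⊆ U` be open such
that `(x,t) ↦ 𝟙_D(x)` is a viscosity supersolution of the level-set equation
`u_t - (div(Du/|Du|)+1)|Du| = 0` in `U × (0,∞)` (i.e. `D` is a stationary
set-theoretic supersolution of `-κ - 1 ≥ 0` on `∂D ∩ U`).  Then every connected
component of `D` is convex. -/
theorem stmt_18 (U : Set (EuclideanSpace ℝ (Fin 2))) (hUopen : IsOpen U)
    (hUconv : Convex ℝ U)
    (D : Set (EuclideanSpace ℝ (Fin 2))) (hDopen : IsOpen D) (hDU : D ⊆ U)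
    (hsuper : ParabSupersol (fun _ => 0) U
      (fun x _ => Set.indicator D (fun _ => (1 : ℝ)) x)) :
    ∀ x ∈ D, Convex ℝ (connectedComponentIn D x) :=
  stmt_18_general le_rfl hUconv hDopen hDU hsuper
end
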